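/- arXiv:2011.07241 — 9 statements merged into one kernel-verified Lean document; each statement's English description precedes it below -/
import Mathlib

section
/- Let N ≥ 1 and let (b,d) ∈ ℤ² be primitive (gcd(b,d) = 1) with N ∤ d. Then there exist k ∈ ℕ and a sequence v₀, …, v_k in ℤ² with v₀ = (0,1), v_k = (b,d), such that b_{i-1}·d_i − b_i·d_{i-1} = 1 for all 1 ≤ i ≤ k (writing v_i = (b_i,d_i)), and moreover N does not divide d_i for any 0 ≤ i ≤ k. -/
/-!
A step `u → v` (determinant one, both second coordinates not divisible by `N`) can be rotated to
`v → -u`. Four rotations close up, so each step is undone by the path `v → -u → -v → u`. In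
particular the steps `(c, 1) → (c - 1, 1)` can be traversed both ways, and `(0, 1)` reaches every
`(b, ±1)`.

If `|d| > 1`, the solutions `(a, c)` of `a * d - b * c = 1` have `c` running over a residue class
modulo `d`, which has one member in `(0, |d|)` and another in `(-|d|, 0)`. These differ by `|d|`,
so `N ∤ d` prevents `N` from dividing both, and `(b, d)` has a predecessor `(a, c)` with
`N ∤ c` and `|c| < |d|`.
-/

open Relation

theorem exists_sequence_of_reflTransGen {α : Type*} {r : α → α → Prop} {x y : α}
    (h : ReflTransGen r x y) :
    ∃ (k : ℕ) (v : ℕ → α), v 0 = x ∧ v k = y ∧ ∀ i < k, r (v i) (v (i + 1)) := by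
  obtain ⟨l, hchain, hlast⟩ := List.exists_isChain_cons_of_relationReflTransGen h
  rw [List.isChain_iff_getElem] at hchain
  exact ⟨l.length, fun i => (x :: l).getD i x, rfl, by grind, by grind⟩

theorem exists_det_eq_one_of_one_lt_abs {b d : ℤ} (h : IsCoprime b d) (hd : 1 < |d|) :
    ∃ a c : ℤ, a * d - b * c = 1 ∧ 0 < c ∧ c < |d| := by
  obtain ⟨x, y, hxy⟩ := h
  have hd0 : d ≠ 0 := abs_pos.mp (one_pos.trans hd)
  have hdet : (y - b * (-x / d)) * d - b * (-x % d) = 1 := by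
    linear_combination hxy - b * Int.emod_add_mul_ediv (-x) d
  refine ⟨_, _, hdet, (Int.emod_nonneg _ hd0).lt_of_ne fun hc => ?_, Int.emod_lt_abs _ hd0⟩
  rw [← hc, mul_zero, sub_zero] at hdet
  exact hd.ne' (Int.isUnit_iff_abs_eq.mp (.of_mul_eq_one_right _ hdet))

/-- The relation between consecutive members of an `N`-connecting sequence. The condition on
divisibility by `N` is imposed on both vectors, so that rotating a step gives a step. -/
def ConnectingStep {R : Type*} [CommRing R] (N : R) (u v : R × R) : Prop :=
  u.1 * v.2 - v.1 * u.2 = 1 ∧ ¬ N ∣ u.2 ∧ ¬ N ∣ v.2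

namespace ConnectingStep

section CommRing

variable {R : Type*} [CommRing R] {N : R} {u v : R × R}

theorem isCoprime_left (h : ConnectingStep N u v) : IsCoprime u.1 u.2 :=
  ⟨v.2, -v.1, by linear_combination h.1⟩

theorem rotate (h : ConnectingStep N u v) : ConnectingStep N v (-u) := by
  obtain ⟨hdet, hu, hv⟩ := h
  refine ⟨?_, hv, by simpa only [Prod.snd_neg, dvd_neg] using hu⟩
  simp only [Prod.fst_neg, Prod.snd_neg]
  linear_combination hdet

theorem reflTransGen_swap (h : ConnectingStep N u v) :
    ReflTransGen (ConnectingStep N) v u := by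
  have h_back : ConnectingStep N (-v) u := by simpa only [neg_neg] using h.rotate.rotate.rotate
  exact ((ReflTransGen.single h.rotate).tail h.rotate.rotate).tail h_back

theorem sub_one (hN : ¬ N ∣ 1) (c : R) : ConnectingStep N (c, 1) (c - 1, 1) :=
  ⟨by ring, hN, hN⟩

end CommRing

theorem reflTransGen_one {N : ℤ} (hN : ¬ N ∣ 1) (b : ℤ) :
    ReflTransGen (ConnectingStep N) (0, 1) (b, 1) := by
  induction b using Int.induction_on with
  | zero => exact .refl
  | succ n ih =>
    have h := (sub_one hN ((n : ℤ) + 1)).reflTransGen_swap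
    rw [add_sub_cancel_right] at h
    exact ih.trans h
  | pred n ih => exact ih.tail (sub_one hN _)

theorem reflTransGen_neg_one {N : ℤ} (hN : ¬ N ∣ 1) (b : ℤ) :
    ReflTransGen (ConnectingStep N) (0, 1) (b, -1) := by
  have h : ConnectingStep N (-b - 1, 1) (b, -1) := by
    simpa only [Prod.neg_mk, neg_neg] using (sub_one hN (-b)).rotate
  exact (reflTransGen_one hN (-b - 1)).tail h

theorem exists_predecessor {N b d : ℤ} (h : IsCoprime b d) (hN : ¬ N ∣ d) (hd : 1 < |d|) :
    ∃ u : ℤ × ℤ, ConnectingStep N u (b, d) ∧ |u.2| < |d| := by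
  obtain ⟨a, c, hdet, hc_pos, hc_lt⟩ := exists_det_eq_one_of_one_lt_abs h hd
  by_cases hNc : N ∣ c
  · have hNc' : ¬ N ∣ c - |d| := fun hsub => hN ((dvd_abs _ _).mp ((dvd_sub_right hNc).mp hsub))
    have hdet' : (a - b * d.sign) * d - b * (c - |d|) = 1 := by
      linear_combination hdet - b * Int.sign_mul_self_eq_abs d
    exact ⟨(a - b * d.sign, c - |d|), ⟨hdet', hNc', hN⟩, abs_lt.mpr ⟨by linarith, by linarith⟩⟩
  · exact ⟨(a, c), ⟨hdet, hNc, hN⟩, by rwa [abs_of_pos hc_pos]⟩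

theorem reflTransGen_of_isCoprime {N b d : ℤ} (h : IsCoprime b d) (hN : ¬ N ∣ d) :
    ReflTransGen (ConnectingStep N) (0, 1) (b, d) := by
  induction hn : d.natAbs using Nat.strong_induction_on generalizing b d with
  | _ n ih =>
    subst hn
    rcases lt_or_ge 1 |d| with hd | hd
    · obtain ⟨⟨a, c⟩, hstep, hc⟩ := exists_predecessor h hN hd
      have hpath := ih c.natAbs (by zify; exact hc) hstep.isCoprime_left
        hstep.2.1 rfl
      exact hpath.tail hstep
    · have hN1 : ¬ N ∣ 1 := fun h1 => hN (h1.trans (one_dvd d))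
      have hd0 : d ≠ 0 := by rintro rfl; exact hN (dvd_zero N)
      obtain rfl | rfl := eq_or_eq_neg_of_abs_eq (hd.antisymm (Int.one_le_abs hd0))
      · exact reflTransGen_one hN1 b
      · exact reflTransGen_neg_one hN1 b

end ConnectingStep

/-- Let `N ≥ 1` and let `(b, d) ∈ ℤ²` be primitive (`gcd(b, d) = 1`) with
`N ∤ d`. Then there is an `N`-connecting sequence from `(0, 1)` to `(b, d)`: a finite
sequence `v 0, …, v k` in `ℤ²` with `v 0 = (0, 1)`, `v k = (b, d)`, with
`(v (i-1)).1 * (v i).2 - (v i).1 * (v (i-1)).2 = 1` for all `1 ≤ i ≤ k`, and such that `N`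
does not divide the second coordinate of any `v i` for `0 ≤ i ≤ k`. -/
theorem N_connecting_sequence_exists (N : ℕ) (hN : 1 ≤ N) (b d : ℤ)
    (h : Int.gcd b d = 1) (hd : ¬ (N : ℤ) ∣ d) :
    ∃ (k : ℕ) (v : ℕ → ℤ × ℤ),
      v 0 = (0, 1) ∧ v k = (b, d) ∧
      (∀ i : ℕ, 1 ≤ i → i ≤ k →
        (v (i - 1)).1 * (v i).2 - (v i).1 * (v (i - 1)).2 = 1) ∧
      (∀ i : ℕ, i ≤ k → ¬ (N : ℤ) ∣ (v i).2) := by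
  have hN1 : ¬ (N : ℤ) ∣ 1 := fun h1 => hd (h1.trans (one_dvd d))
  obtain ⟨k, v, hv0, hvk, hstep⟩ := exists_sequence_of_reflTransGen
    (ConnectingStep.reflTransGen_of_isCoprime (Int.isCoprime_iff_gcd_eq_one.mpr h) hd)
  refine ⟨k, v, hv0, hvk, fun i hi hik => ?_, fun i hik => ?_⟩
  · obtain ⟨j, rfl⟩ := Nat.exists_eq_add_of_le' hi
    exact (hstep j hik).1
  · cases i with
    | zero => rwa [hv0]
    | succ j => exact (hstep j hik).2.2
end

section
/- Let γ ∈ SL₂(ℤ) satisfy |trace γ| > 2, and let w ∈ ℤ² be a nonzero row vector. Then the norms ‖w·γⁿ‖ tend to infinity as n → ∞; in particular the vectors w·γⁿ (row vector multiplied on the right by the n-th power of γ) are unbounded. -/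
/-! If a nonsingular integer matrix `γ` has no root of unity as an eigenvalue, then `γ ^ k - 1` is
nonsingular for every `k > 0`, so the orbit `w·γⁿ` of a vector `w ≠ 0` never repeats. As `ℤᵐ` is
discrete in `ℝᵐ`, such an orbit leaves every ball. An eigenvalue `μ` of a matrix in `SL₂(ℤ)` with
`|μ| = 1` would give `|trace γ| = |μ + μ⁻¹| ≤ 2`, so the criterion applies when `|trace γ| > 2`. -/

open Filter Matrix

theorem injective_vecMul_pow {m R : Type*} [Fintype m] [DecidableEq m] [CommRing R]
    [NoZeroDivisors R] {γ : Matrix m m R} (hdet : γ.det ≠ 0)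
    (hpow : ∀ k > 0, (γ ^ k - 1).det ≠ 0) {w : m → R} (hw : w ≠ 0) :
    Function.Injective fun n : ℕ => w ᵥ* γ ^ n := by
  refine Function.Injective.of_lt_imp_ne fun a b hab heq => hw ?_
  obtain ⟨k, hk, rfl⟩ := exists_pos_add_of_lt' hab
  have hzero : (w ᵥ* γ ^ a) ᵥ* (γ ^ k - 1) = 0 := by
    rw [vecMul_sub, vecMul_one, vecMul_vecMul, ← pow_add, sub_eq_zero]
    exact heq.symm
  have hdet_pow : (γ ^ a).det ≠ 0 := by
    rw [det_pow]
    exact pow_ne_zero a hdet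
  exact eq_zero_of_vecMul_eq_zero hdet_pow (eq_zero_of_vecMul_eq_zero (hpow k hk) hzero)

theorem det_pow_sub_one_ne_zero {m K : Type*} [Fintype m] [DecidableEq m] [Field K]
    [IsAlgClosed K] {A : Matrix m m K} (hA : ∀ μ ∈ spectrum K A, ¬IsOfFinOrder μ) {k : ℕ}
    (hk : 0 < k) : (A ^ k - 1).det ≠ 0 := by
  intro hdet
  have hone : (1 : K) ∈ spectrum K (A ^ k) := by
    rw [spectrum.mem_iff, map_one, IsUnit.sub_iff, isUnit_iff_isUnit_det, hdet]
    exact not_isUnit_zero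
  rw [spectrum.map_pow_of_pos A hk] at hone
  obtain ⟨μ, hμ, hμk⟩ := hone
  exact hA μ hμ (isOfFinOrder_iff_pow_eq_one.mpr ⟨k, hk, hμk⟩)

theorem norm_trace_le_one_add_norm_det_of_mem_spectrum {K : Type*} [NormedField K]
    {A : Matrix (Fin 2) (Fin 2) K} {μ : K} (hμ : μ ∈ spectrum K A) (hnorm : ‖μ‖ = 1) :
    ‖A.trace‖ ≤ 1 + ‖A.det‖ := by
  have hroot : A.trace * μ = μ ^ 2 + A.det := by
    have hcharpoly := mem_spectrum_iff_isRoot_charpoly.mp hμ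
    simp only [charpoly_fin_two, Polynomial.IsRoot.def, Polynomial.eval_add, Polynomial.eval_sub,
      Polynomial.eval_mul, Polynomial.eval_pow, Polynomial.eval_X, Polynomial.eval_C] at hcharpoly
    linear_combination -hcharpoly
  calc ‖A.trace‖ = ‖A.trace * μ‖ := by rw [norm_mul, hnorm, mul_one]
    _ = ‖μ ^ 2 + A.det‖ := by rw [hroot]
    _ ≤ ‖μ ^ 2‖ + ‖A.det‖ := norm_add_le _ _
    _ = 1 + ‖A.det‖ := by rw [norm_pow, hnorm, one_pow]

theorem not_isOfFinOrder_of_one_add_abs_det_lt_abs_trace {γ : Matrix (Fin 2) (Fin 2) ℤ}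
    (hγ : 1 + |γ.det| < |γ.trace|) {μ : ℂ}
    (hμ : μ ∈ spectrum ℂ (γ.map (Int.castRingHom ℂ))) : ¬IsOfFinOrder μ := by
  intro hfin
  have hle := norm_trace_le_one_add_norm_det_of_mem_spectrum hμ hfin.norm_eq_one
  have htrace : (γ.map (Int.castRingHom ℂ)).trace = γ.trace :=
    (AddMonoidHom.map_trace (Int.castRingHom ℂ) γ).symm
  have hdet : (γ.map (Int.castRingHom ℂ)).det = γ.det :=
    ((Int.castRingHom ℂ).map_det γ).symm
  rw [htrace, hdet, Complex.norm_intCast, Complex.norm_intCast] at hle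
  exact hγ.not_ge (by exact_mod_cast hle)

theorem tendsto_norm_intCast_cofinite_atTop {ι m : Type*} [Fintype m] {f : ι → m → ℤ}
    (hf : Function.Injective f) :
    Tendsto (fun i => ‖(fun j => (f i j : ℝ) : m → ℝ)‖) cofinite atTop := by
  have hnorm (v : m → ℤ) : ‖(fun j => (v j : ℝ) : m → ℝ)‖ = ‖v‖ := rfl
  simp only [hnorm]
  have hcocompact : Tendsto f cofinite (cocompact (m → ℤ)) :=
    cocompact_eq_cofinite (m → ℤ) ▸ hf.tendsto_cofinite
  exact (tendsto_norm_cocompact_atTop (E := m → ℤ)).comp hcocompact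

theorem hyperbolic_orbit_unbounded_general {m : Type*} [Fintype m] [DecidableEq m]
    {γ : Matrix m m ℤ} (hdet : γ.det ≠ 0)
    (hspec : ∀ μ ∈ spectrum ℂ (γ.map (Int.castRingHom ℂ)), ¬IsOfFinOrder μ)
    {w : m → ℤ} (hw : w ≠ 0) :
    Tendsto (fun n : ℕ => ‖(fun i => ((w ᵥ* γ ^ n) i : ℝ) : m → ℝ)‖) atTop atTop := by
  have hpow : ∀ k > 0, (γ ^ k - 1).det ≠ 0 := by
    intro k hk hzero
    apply det_pow_sub_one_ne_zero hspec hk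
    have hmap : γ.map (Int.castRingHom ℂ) ^ k - 1 = (Int.castRingHom ℂ).mapMatrix (γ ^ k - 1) := by
      rw [map_sub, map_pow, map_one, RingHom.mapMatrix_apply]
    rw [hmap, ← RingHom.map_det, hzero, map_zero]
  rw [← Nat.cofinite_eq_atTop]
  exact tendsto_norm_intCast_cofinite_atTop (injective_vecMul_pow hdet hpow hw)

/-- Let `γ ∈ SL₂(ℤ)` be hyperbolic, i.e. `|trace γ| > 2`, and let
`w ∈ ℤ²` be a nonzero row vector. Then the norms `‖w·γⁿ‖` (row vector multiplied on the
right by the `n`-th power of `γ`, viewed in `ℝ²`) tend to infinity as `n → ∞`. -/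
theorem hyperbolic_orbit_unbounded (γ : Matrix (Fin 2) (Fin 2) ℤ) (hdet : γ.det = 1)
    (htr : 2 < |γ.trace|) (w : Fin 2 → ℤ) (hw : w ≠ 0) :
    Filter.Tendsto
      (fun n : ℕ => ‖(fun i => ((Matrix.vecMul w (γ ^ n)) i : ℝ) : Fin 2 → ℝ)‖)
      Filter.atTop Filter.atTop :=
  hyperbolic_orbit_unbounded_general (by simp [hdet])
    (fun _ => not_isOfFinOrder_of_one_add_abs_det_lt_abs_trace (by simpa [hdet] using htr)) hw
end

section
/- Let S ⊆ ℤ² be a finite set with at least two elements, and for γ ∈ SL₂(ℤ) let S·γ = { v·γ : v ∈ S } (row vectors multiplied on the right by γ). Then the sets S·γ, as γ ranges over SL₂(ℤ), fall into infinitely many translation classes: there is an infinite subset T ⊆ SL₂(ℤ) such that for distinct γ, γ′ ∈ T there is no u ∈ ℤ² with S·γ = (S·γ′) + u. -/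
/-!
The difference set `S - S` does not change when `S` is translated, and `S·γ - S·γ = (S - S)·γ`.
For distinct `p, q ∈ S` the vector `p - q` lies in `S - S`, and transvections already move it to
infinitely many places. Since each `(S - S)·γ` is finite, infinitely many such sets are needed to
cover this orbit; choose one `γ` for each of them.
-/

open Matrix Set
open scoped Pointwise

theorem image_add_right_sub_image_add_right {G : Type*} [AddGroup G] (A : Set G) (u : G) :
    (· + u) '' A - (· + u) '' A = A - A := by
  simp only [← image2_sub, image2_image_left, image2_image_right, add_sub_add_right_eq_sub]

theorem infinite_range_image_of_mem {ι α β : Type*} {f : ι → α → β} {D : Set α} {d : α}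
    (hD : D.Finite) (hd : d ∈ D) (hf : (range fun i => f i d).Infinite) :
    (range fun i => f i '' D).Infinite := by
  intro hfin
  refine hf ((hfin.sUnion (forall_mem_range.mpr fun i => hD.image (f i))).subset ?_)
  rintro _ ⟨i, rfl⟩
  exact mem_sUnion_of_mem (mem_image_of_mem (f i) hd) (mem_range_self i)

theorem exists_infinite_pairwise_image_not_translate {ι F G H : Type*} [AddGroup G] [AddGroup H]
    [FunLike F G H] [AddMonoidHomClass F G H] {f : ι → F} {S : Set G} {p q : G}
    (hS : S.Finite) (hp : p ∈ S) (hq : q ∈ S) (hf : (range fun i => f i (p - q)).Infinite) :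
    ∃ T : Set ι, T.Infinite ∧
      T.Pairwise fun i j => ¬ ∃ u : H, f i '' S = (fun v => f j v + u) '' S := by
  have hrange : (range fun i => f i '' (S - S)).Infinite :=
    infinite_range_image_of_mem (hS.sub hS) (sub_mem_sub hp hq) hf
  obtain ⟨T, hT, hinj⟩ := exists_image_eq_injOn_of_subset_range
    (subset_refl (range fun i => f i '' (S - S)))
  refine ⟨T, Infinite.of_image _ (hT ▸ hrange), ?_⟩
  rintro i hi j hj hij ⟨u, hu⟩
  refine hij (hinj hi hj ?_)
  calc f i '' (S - S) = f i '' S - f i '' S := image_sub (f i)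
    _ = (· + u) '' (f j '' S) - (· + u) '' (f j '' S) := by rw [hu, image_image]
    _ = f j '' S - f j '' S := image_add_right_sub_image_add_right _ u
    _ = f j '' (S - S) := (image_sub (f j)).symm

section SpecialLinearGroup

variable {n R : Type*} [Fintype n] [DecidableEq n] [CommRing R]

theorem vecMul_transvection_apply_same (v : n → R) (i j : n) (c : R) :
    (v ᵥ* transvection i j c) j = v j + c * v i :=
  mul_transvection_apply_same i j () c (replicateRow Unit v)

variable [Nontrivial n] [IsDomain R] [Infinite R]

theorem infinite_range_vecMul_specialLinearGroup {d : n → R} (hd : d ≠ 0) :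
    (range fun γ : SpecialLinearGroup n R => d ᵥ* (γ : Matrix n n R)).Infinite := by
  obtain ⟨i, hi⟩ : ∃ i, d i ≠ 0 := Function.ne_iff.mp hd
  obtain ⟨j, hji⟩ := exists_ne i
  have hinj : Function.Injective fun c : R => d ᵥ* transvection i j c := by
    intro b c hbc
    have hj := congrFun hbc j
    simp only [vecMul_transvection_apply_same] at hj
    exact mul_right_cancel₀ hi (add_left_cancel hj)
  exact (infinite_range_of_injective hinj).mono
    (range_comp_subset_range (SpecialLinearGroup.transvection hji.symm) _)

theorem support_orbit_infinite_up_to_translation_general {S : Set (n → R)}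
    (hfin : S.Finite) (hS : S.Nontrivial) :
    ∃ T : Set (SpecialLinearGroup n R), T.Infinite ∧
      T.Pairwise fun γ γ' => ¬ ∃ u : n → R,
        (fun v => v ᵥ* (γ : Matrix n n R)) '' S =
          (fun v => v ᵥ* (γ' : Matrix n n R) + u) '' S := by
  obtain ⟨p, hp, q, hq, hpq⟩ := hS
  exact exists_infinite_pairwise_image_not_translate
    (f := fun γ : SpecialLinearGroup n R => (γ : Matrix n n R).vecMulLinear) hfin hp hq
    (infinite_range_vecMul_specialLinearGroup (sub_ne_zero.mpr hpq))

end SpecialLinearGroup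

/-- Let `S ⊆ ℤ²` be a finite set with at least two elements, and for
`γ ∈ SL₂(ℤ)` let `S·γ` denote the image of `S` under right multiplication of row vectors
by `γ`. Then the sets `S·γ` fall into infinitely many translation classes: there is an
infinite set `T ⊆ SL₂(ℤ)` such that for distinct `γ, γ' ∈ T` there is no `u ∈ ℤ²` with
`S·γ = (S·γ') + u`. -/
theorem support_orbit_infinite_up_to_translation (S : Finset (Fin 2 → ℤ))
    (hS : 2 ≤ S.card) :
    ∃ T : Set (Matrix.SpecialLinearGroup (Fin 2) ℤ), T.Infinite ∧
      ∀ γ ∈ T, ∀ γ' ∈ T, γ ≠ γ' →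
        ¬ ∃ u : Fin 2 → ℤ,
            (fun v => Matrix.vecMul v (γ : Matrix (Fin 2) (Fin 2) ℤ)) '' (S : Set (Fin 2 → ℤ)) =
            (fun v => Matrix.vecMul v (γ' : Matrix (Fin 2) (Fin 2) ℤ) + u) '' (S : Set (Fin 2 → ℤ)) := by
  exact support_orbit_infinite_up_to_translation_general S.finite_toSet
    (Finset.one_lt_card_iff_nontrivial.mp hS)
end

section
/- Let Q be a group, Δ a submonoid of Q, and Γ a subgroup of Q whose underlying set is contained in Δ. Let M be an abelian group with an action of Δ by additive endomorphisms (a monoid homomorphism Δ → End(M)). Fix elements g₁,…,g_t ∈ Δ such that the left cosets g₁Γ,…,g_tΓ ⊆ Q are pairwise disjoint and such that for every γ ∈ Γ and every j there exists i with γ·g_j ∈ g_i·Γ. For a 1-cocycle θ : Γ → M (i.e. θ(γγ′) = γ·θ(γ′) + θ(γ) for all γ, γ′ ∈ Γ), define Tθ : Γ → M by Tθ(γ) = Σ_{j=1}^t g_{σ_γ(j)}·θ(γ_j), where for each j, σ_γ(j) ∈ {1,…,t} and γ_j ∈ Γ are the unique elements with γ·g_j = g_{σ_γ(j)}·γ_j.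 Then: (1) Tθ is again a 1-cocycle; (2) if θ is a coboundary, i.e. θ(γ) = γ·m − m for some fixed m ∈ M, then Tθ is a coboundary; (3) if g′₁,…,g′_t ∈ Δ is another family satisfying the same hypotheses and with ⋃_j g′_j·Γ = ⋃_j g_j·Γ, then the cocycle T′θ obtained from the g′_j differs from Tθ by a coboundary. -/
/-!
Call `Φ : Δ → M` a right primitive of the cocycle `θ` if `Φ (x * b) - Φ x = x • θ b` for `x ∈ Δ` and
`b ∈ Γ`. Its defect of left equivariance `Φ (γ * x) - γ • Φ x` then depends only on the coset `x Γ`,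
so its sum over the cosets `g j Γ` is intrinsic; the sum is a cocycle in `γ` because left
translation by `Γ` permutes the cosets. The Hecke transform computed with the representatives `g` is
this sum plus the coboundary of `∑ j, Φ (g j)`. Right primitives always exist, and `x ↦ x • m` is
one with vanishing defect when `θ` is the coboundary of `m`.
-/

section HeckeTransform

open groupCohomology

variable {Γ D M ι κ : Type*} [Group Γ] [Monoid D] [AddCommGroup M] [DistribMulAction Γ M]
  {φ : Γ →* D} {θ : Γ → M} {Φ : D → M}

/-- The failure of `Φ` to be equivariant for left translation by `γ`, at the point `x`. -/
def leftDefect (φ : Γ →* D) (Φ : D → M) (γ : Γ) (x : D) : M :=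
  Φ (φ γ * x) - γ • Φ x

lemma leftDefect_mul (γ γ' : Γ) (x : D) :
    leftDefect φ Φ (γ * γ') x = γ • leftDefect φ Φ γ' x + leftDefect φ Φ γ (φ γ' * x) := by
  simp only [leftDefect, map_mul, mul_assoc, mul_smul, smul_sub]
  abel

variable [DistribMulAction D M]

/-- `Φ` is a primitive of `θ : Γ → M` with respect to right translation by `Γ`, which acts on `D`
through `φ`. -/
def IsRightPrimitive (φ : Γ →* D) (θ : Γ → M) (Φ : D → M) : Prop :=
  ∀ x b, Φ (x * φ b) = x • θ b + Φ x

lemma leftDefect_smul_const (hφ : ∀ (γ : Γ) (m : M), φ γ • m = γ • m) (m : M) (γ : Γ) (x : D) :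
    leftDefect φ (fun y => y • m) γ x = 0 := by
  simp only [leftDefect, mul_smul, hφ, sub_self]

lemma IsRightPrimitive.leftDefect_mul_right (hφ : ∀ (γ : Γ) (m : M), φ γ • m = γ • m)
    (hΦ : IsRightPrimitive φ θ Φ) (γ : Γ) (x : D) (b : Γ) :
    leftDefect φ Φ γ (x * φ b) = leftDefect φ Φ γ x := by
  simp only [leftDefect, ← mul_assoc, hΦ _ b, mul_smul, hφ, smul_add]
  abel

lemma isRightPrimitive_smul_const (hφ : ∀ (γ : Γ) (m : M), φ γ • m = γ • m) {m : M}
    (hm : ∀ γ : Γ, γ • m - m = θ γ) : IsRightPrimitive φ θ (fun x => x • m) := by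
  intro x b
  simp only [← hm, mul_smul, hφ, smul_sub, sub_add_cancel]

/-- If `s x = x * φ (h x)` is a section of `D → D / Γ`, this is the right primitive that vanishes
on the image of `s`. -/
lemma isRightPrimitive_neg_smul (hφ : ∀ (γ : Γ) (m : M), φ γ • m = γ • m) (hθ : IsCocycle₁ θ)
    {h : D → Γ} (hh : ∀ x b, h (x * φ b) = b⁻¹ * h x) :
    IsRightPrimitive φ θ (fun x => -(x • θ (h x))) := by
  intro x b
  have hsplit : θ (h x) = b • θ (b⁻¹ * h x) + θ b := by
    rw [← hθ, mul_inv_cancel_left]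
  simp only [hh, hsplit, mul_smul, hφ, smul_add]
  abel

/-- Left translation by `γ ∈ Γ` permutes the cosets `g j Γ` according to `σ γ`, and `c γ j` is the
discrepancy between `γ * g j` and the representative `g (σ γ j)` of its coset. -/
structure IsCosetPermutation (φ : Γ →* D) (g : ι → D) (σ : Γ → ι → ι) (c : Γ → ι → Γ) : Prop where
  mul_eq : ∀ γ j, φ γ * g j = g (σ γ j) * φ (c γ j)
  bijective : ∀ γ, Function.Bijective (σ γ)

variable [Fintype ι] [Fintype κ] {g : ι → D} {σ : Γ → ι → ι} {c : Γ → ι → Γ}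
  {g' : κ → D} {σ' : Γ → κ → κ} {c' : Γ → κ → Γ}

/-- The Hecke operator on functions `θ : Γ → M` attached to coset representatives `g` and the
permutation data `σ`, `c` of `IsCosetPermutation`. -/
def heckeTransform (g : ι → D) (σ : Γ → ι → ι) (c : Γ → ι → Γ) (θ : Γ → M) (γ : Γ) : M :=
  ∑ j, g (σ γ j) • θ (c γ j)

lemma IsRightPrimitive.sum_leftDefect_eq (hφ : ∀ (γ : Γ) (m : M), φ γ • m = γ • m)
    (hΦ : IsRightPrimitive φ θ Φ) {τ : κ → ι} (hτ : Function.Bijective τ) {d : κ → Γ}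
    (hd : ∀ j, g' j = g (τ j) * φ (d j)) (γ : Γ) :
    ∑ j, leftDefect φ Φ γ (g' j) = ∑ i, leftDefect φ Φ γ (g i) := by
  simp only [hd, hΦ.leftDefect_mul_right hφ]
  exact hτ.sum_comp fun i => leftDefect φ Φ γ (g i)

lemma IsRightPrimitive.isCocycle₁_sum_leftDefect (hφ : ∀ (γ : Γ) (m : M), φ γ • m = γ • m)
    (hΦ : IsRightPrimitive φ θ Φ) (hg : IsCosetPermutation φ g σ c) :
    IsCocycle₁ fun γ => ∑ j, leftDefect φ Φ γ (g j) := by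
  intro γ γ'
  simp only [leftDefect_mul, Finset.sum_add_distrib, ← Finset.smul_sum]
  rw [hΦ.sum_leftDefect_eq hφ (hg.bijective γ') (hg.mul_eq γ')]

lemma IsRightPrimitive.heckeTransform_eq (hΦ : IsRightPrimitive φ θ Φ)
    (hg : IsCosetPermutation φ g σ c) (γ : Γ) :
    heckeTransform g σ c θ γ =
      ∑ j, leftDefect φ Φ γ (g j) + (γ • ∑ j, Φ (g j) - ∑ j, Φ (g j)) := by
  have hterm (j : ι) : Φ (φ γ * g j) = g (σ γ j) • θ (c γ j) + Φ (g (σ γ j)) := by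
    rw [hg.mul_eq, hΦ]
  simp only [leftDefect, hterm, Finset.sum_sub_distrib, Finset.sum_add_distrib, Finset.smul_sum,
    heckeTransform, (hg.bijective γ).sum_comp fun j => Φ (g j)]
  abel

lemma IsRightPrimitive.isCocycle₁_heckeTransform (hφ : ∀ (γ : Γ) (m : M), φ γ • m = γ • m)
    (hΦ : IsRightPrimitive φ θ Φ) (hg : IsCosetPermutation φ g σ c) :
    IsCocycle₁ (heckeTransform g σ c θ) := by
  intro γ γ'
  simp only [hΦ.heckeTransform_eq hg, hΦ.isCocycle₁_sum_leftDefect hφ hg γ γ', mul_smul, smul_add,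
    smul_sub]
  abel

lemma isCoboundary₁_heckeTransform (hφ : ∀ (γ : Γ) (m : M), φ γ • m = γ • m)
    (hg : IsCosetPermutation φ g σ c) (hθ : IsCoboundary₁ θ) :
    IsCoboundary₁ (heckeTransform g σ c θ) := by
  obtain ⟨m, hm⟩ := hθ
  refine ⟨∑ j, g j • m, fun γ => ?_⟩
  simp only [(isRightPrimitive_smul_const hφ hm).heckeTransform_eq hg, leftDefect_smul_const hφ,
    Finset.sum_const_zero, zero_add]

lemma IsRightPrimitive.isCoboundary₁_heckeTransform_sub
    (hφ : ∀ (γ : Γ) (m : M), φ γ • m = γ • m) (hΦ : IsRightPrimitive φ θ Φ)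
    (hg : IsCosetPermutation φ g σ c) (hg' : IsCosetPermutation φ g' σ' c') {τ : κ → ι}
    (hτ : Function.Bijective τ) {d : κ → Γ} (hd : ∀ j, g' j = g (τ j) * φ (d j)) :
    IsCoboundary₁ fun γ => heckeTransform g' σ' c' θ γ - heckeTransform g σ c θ γ := by
  refine ⟨∑ j, Φ (g' j) - ∑ i, Φ (g i), fun γ => ?_⟩
  simp only [hΦ.heckeTransform_eq hg, hΦ.heckeTransform_eq hg', hΦ.sum_leftDefect_eq hφ hτ hd,
    smul_sub]
  abel

end HeckeTransform

section Cosets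

variable {Q ι κ : Type*} [Group Q] {Γ : Subgroup Q}

lemma exists_map_mul_eq_inv_mul (Γ : Subgroup Q) :
    ∃ h : Q → Γ, ∀ (x : Q) (b : Γ), h (x * b) = b⁻¹ * h x := by
  choose h hh using QuotientGroup.mk_out_eq_mul Γ
  refine ⟨h, fun x b => Subtype.ext (mul_left_cancel (a := x * b) ?_)⟩
  rw [← hh, QuotientGroup.mk_mul_of_mem x b.2, hh]
  simp only [Subgroup.coe_mul, Subgroup.coe_inv, mul_assoc, mul_inv_cancel_left]

lemma injective_of_mul_eq_mul {g : κ → Q} {k : ι → Q}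
    (hg : ∀ i j, ∀ γ ∈ Γ, g i * γ = g j → i = j) (x : Q) {s : κ → ι} {c : κ → Γ}
    (h : ∀ j, x * g j = k (s j) * c j) : Function.Injective s := by
  intro i j hij
  refine hg i j ((c i)⁻¹ * c j : Γ) (SetLike.coe_mem _) (mul_left_cancel (a := x) ?_)
  rw [← mul_assoc, h i, h j, hij, Subgroup.coe_mul, Subgroup.coe_inv, mul_assoc,
    mul_inv_cancel_left]

lemma exists_eq_mul_of_iUnion_subset {g : ι → Q} {g' : κ → Q}
    (h : ⋃ j, (fun x => g' j * x) '' (Γ : Set Q) ⊆ ⋃ i, (fun x => g i * x) '' (Γ : Set Q)) :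
    ∃ (τ : κ → ι) (d : κ → Γ), ∀ j, g' j = g (τ j) * d j := by
  have hmem (j : κ) : ∃ (i : ι) (d : Γ), g' j = g i * d := by
    obtain ⟨i, d, hd, hid⟩ :=
      Set.mem_iUnion.mp (h (Set.mem_iUnion.mpr ⟨j, 1, Γ.one_mem, mul_one _⟩))
    exact ⟨i, ⟨d, hd⟩, hid.symm⟩
  choose τ d hd using hmem
  exact ⟨τ, d, hd⟩

lemma isCosetPermutation_of_disjoint [Finite ι] {Δ : Submonoid Q} (hΓΔ : ∀ x : Γ, (x : Q) ∈ Δ)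
    {g : ι → Δ} (hg : ∀ i j, ∀ γ ∈ Γ, (g i : Q) * γ = g j → i = j) {σ : Γ → ι → ι} {c : Γ → ι → Γ}
    (h : ∀ (γ : Γ) j, (γ : Q) * g j = g (σ γ j) * c γ j) :
    IsCosetPermutation (Γ.subtype.codRestrict Δ hΓΔ) g σ c where
  mul_eq γ j := Subtype.ext (h γ j)
  bijective γ := Finite.injective_iff_bijective.mp <|
    injective_of_mul_eq_mul (k := fun j => (g j : Q)) hg γ (h γ)

end Cosets

/-- Well-definedness of Hecke operators on first group cohomology.
`Q` is a group, `Δ` a submonoid, `Γ` a subgroup contained in `Δ`, and `M` an abelian group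
with a `Δ`-action by additive endomorphisms `ρ`.  Given coset representatives
`g 1, …, g t ∈ Δ` with pairwise disjoint left cosets `g j • Γ`, permutation data
`σ, c` with `γ * g j = g (σ γ j) * c γ j`, and a 1-cocycle `θ : Γ → M`, the Hecke
transform `Tθ γ = ∑ j, ρ (g (σ γ j)) (θ (c γ j))` is (1) again a 1-cocycle;
(2) a coboundary whenever `θ` is; and (3) modulo coboundaries independent of the choice
of representatives with the same union of cosets. -/
theorem hecke_operator_well_defined
    {Q : Type*} [Group Q] (Δ : Submonoid Q) (Γ : Subgroup Q)
    (hΓΔ : ∀ x ∈ Γ, x ∈ Δ)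
    {M : Type*} [AddCommGroup M] (ρ : Δ →* AddMonoid.End M)
    (t : ℕ) (g : Fin t → Δ)
    (hdisj : ∀ i j : Fin t, ∀ γ ∈ Γ, (g i : Q) * γ = (g j : Q) → i = j)
    (σ : Γ → Fin t → Fin t) (c : Γ → Fin t → Γ)
    (hσc : ∀ (γ : Γ) (j : Fin t), (γ : Q) * (g j : Q) = (g (σ γ j) : Q) * ((c γ j : Q)))
    (θ : Γ → M)
    (hθ : ∀ γ γ' : Γ, θ (γ * γ') = ρ ⟨(γ : Q), hΓΔ _ γ.2⟩ (θ γ') + θ γ) :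
    -- (1) `Tθ` is a 1-cocycle
    (∀ γ γ' : Γ,
        (∑ j : Fin t, ρ (g (σ (γ * γ') j)) (θ (c (γ * γ') j)))
          = ρ ⟨(γ : Q), hΓΔ _ γ.2⟩ (∑ j : Fin t, ρ (g (σ γ' j)) (θ (c γ' j)))
              + ∑ j : Fin t, ρ (g (σ γ j)) (θ (c γ j))) ∧
    -- (2) if `θ` is a coboundary then so is `Tθ`
    ((∃ m : M, ∀ γ : Γ, θ γ = ρ ⟨(γ : Q), hΓΔ _ γ.2⟩ m - m) →
      ∃ m : M, ∀ γ : Γ,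
        (∑ j : Fin t, ρ (g (σ γ j)) (θ (c γ j))) = ρ ⟨(γ : Q), hΓΔ _ γ.2⟩ m - m) ∧
    -- (3) independence of the choice of coset representatives, up to coboundary
    (∀ (g' : Fin t → Δ) (σ' : Γ → Fin t → Fin t) (c' : Γ → Fin t → Γ),
      (∀ i j : Fin t, ∀ γ ∈ Γ, (g' i : Q) * γ = (g' j : Q) → i = j) →
      (∀ (γ : Γ) (j : Fin t),
          (γ : Q) * (g' j : Q) = (g' (σ' γ j) : Q) * ((c' γ j : Q))) →
      ((⋃ j : Fin t, (fun x => (g j : Q) * x) '' (Γ : Set Q))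
          = ⋃ j : Fin t, (fun x => (g' j : Q) * x) '' (Γ : Set Q)) →
      ∃ m : M, ∀ γ : Γ,
        (∑ j : Fin t, ρ (g' (σ' γ j)) (θ (c' γ j)))
          = (∑ j : Fin t, ρ (g (σ γ j)) (θ (c γ j)))
              + (ρ ⟨(γ : Q), hΓΔ _ γ.2⟩ m - m)) := by
  let _ : DistribMulAction Δ M := DistribMulAction.compHom M ρ
  let φ : Γ →* Δ := Γ.subtype.codRestrict Δ fun γ => hΓΔ _ γ.2
  let _ : DistribMulAction Γ M := DistribMulAction.compHom M φ
  have hφ (γ : Γ) (m : M) : φ γ • m = γ • m := rfl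
  obtain ⟨h, hh⟩ := exists_map_mul_eq_inv_mul Γ
  have hΦ := isRightPrimitive_neg_smul hφ hθ (h := fun x => h x) fun x b => hh x b
  have hg : IsCosetPermutation φ g σ c := isCosetPermutation_of_disjoint _ hdisj hσc
  refine ⟨hΦ.isCocycle₁_heckeTransform hφ hg, ?_, ?_⟩
  · rintro ⟨m, hm⟩
    obtain ⟨n, hn⟩ := isCoboundary₁_heckeTransform hφ hg ⟨m, fun γ => (hm γ).symm⟩
    exact ⟨n, fun γ => (hn γ).symm⟩
  · intro g' σ' c' hdisj' hσc' hU
    have hg' : IsCosetPermutation φ g' σ' c' := isCosetPermutation_of_disjoint _ hdisj' hσc'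
    obtain ⟨τ, d, hd⟩ := exists_eq_mul_of_iUnion_subset hU.ge
    have hτ : Function.Bijective τ := Finite.injective_iff_bijective.mp <|
      injective_of_mul_eq_mul (k := fun i => (g i : Q)) hdisj' 1 fun j => (one_mul _).trans (hd j)
    obtain ⟨m, hm⟩ :=
      hΦ.isCoboundary₁_heckeTransform_sub hφ hg hg' hτ fun j => Subtype.ext (hd j)
    exact ⟨m, fun γ => sub_eq_iff_eq_add'.mp (hm γ).symm⟩
end

section
/- Define δ : ℝ³ → ℤ as follows: δ(a,b,c) = 0 if b − a ∈ ℤ or b − c ∈ ℤ; otherwise δ(a,b,c) = 0 if the fractional part of b − a is strictly less than the fractional part of c − a, and δ(a,b,c) = 1 otherwise. Then for all a, b, c, d ∈ ℝ one has δ(b,c,d) − δ(a,c,d) + δ(a,b,d) − δ(a,b,c) = 0. -/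
open scoped Classical in
/-- The function `δ : ℝ³ → ℤ`: identifying the circle `S¹` with `ℝ/ℤ`, `δ (a, b, c) = 0`
when `b` lies on the closed counterclockwise arc from `a` to `c`, and `1` otherwise.
Explicitly: `δ (a, b, c) = 0` if `b - a ∈ ℤ` or `b - c ∈ ℤ`; otherwise `δ (a, b, c) = 0`
if the fractional part of `b - a` is strictly less than the fractional part of `c - a`,
and `δ (a, b, c) = 1` otherwise. -/
noncomputable def arcDelta (a b c : ℝ) : ℤ :=
  if (∃ n : ℤ, b - a = (n : ℝ)) ∨ (∃ n : ℤ, b - c = (n : ℝ)) then 0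
  else if Int.fract (b - a) < Int.fract (c - a) then 0 else 1

/-! The function `δ` is the coboundary of the integral 1-cochain `(a, b) ↦ -⌊b - a⌋` on `ℝ`:
`δ (a, b, c)` is the borrow incurred when the fractional part of `b - a` is subtracted from
that of `c - a`. -/

section FloorRing

variable {R : Type*} [Ring R] [LinearOrder R] [IsStrictOrderedRing R] [FloorRing R]

theorem floor_fract_sub_fract (x y : R) :
    ⌊Int.fract x - Int.fract y⌋ = if Int.fract y ≤ Int.fract x then 0 else -1 := by
  split_ifs with h
  · exact Int.floor_eq_zero_iff.mpr
      ⟨sub_nonneg.mpr h, (sub_le_self _ (Int.fract_nonneg y)).trans_lt (Int.fract_lt_one x)⟩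
  · have lower : -1 ≤ Int.fract x - Int.fract y := by
      rw [neg_le_sub_iff_le_add]
      exact (Int.fract_lt_one y).le.trans (le_add_of_nonneg_left (Int.fract_nonneg x))
    have upper : Int.fract x - Int.fract y < 0 := sub_neg.mpr (not_le.mp h)
    exact Int.floor_eq_iff.mpr ⟨by simpa using lower, by simpa using upper⟩

theorem floor_sub_eq_floor_sub_floor_add (x y : R) :
    ⌊x - y⌋ = ⌊x⌋ - ⌊y⌋ + ⌊Int.fract x - Int.fract y⌋ := by
  rw [← Int.floor_intCast_add, Int.cast_sub, sub_add_sub_comm, Int.floor_add_fract,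
    Int.floor_add_fract]

end FloorRing

theorem arcDelta_eq_ite_fract_le (a b c : ℝ) :
    arcDelta a b c = if Int.fract (b - a) ≤ Int.fract (c - a) then 0 else 1 := by
  have fract_eq_zero_iff : Int.fract (b - a) = 0 ↔ ∃ n : ℤ, b - a = n := by
    simp only [Int.fract_eq_zero_iff, Set.mem_range, eq_comm]
  have fract_eq_iff : Int.fract (b - a) = Int.fract (c - a) ↔ ∃ n : ℤ, b - c = n := by
    rw [Int.fract_eq_fract, sub_sub_sub_cancel_right]
  have fract_le_of_eq_zero (h : Int.fract (b - a) = 0) : Int.fract (b - a) ≤ Int.fract (c - a) :=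
    h.trans_le (Int.fract_nonneg _)
  rw [arcDelta, ← fract_eq_zero_iff, ← fract_eq_iff, ← ite_or]
  refine if_congr ?_ rfl rfl
  rw [or_assoc, ← le_iff_eq_or_lt, or_iff_right_of_imp fract_le_of_eq_zero]

theorem arcDelta_eq_floor (a b c : ℝ) :
    arcDelta a b c = ⌊c - a⌋ - ⌊b - a⌋ - ⌊c - b⌋ := by
  have h := floor_sub_eq_floor_sub_floor_add (c - a) (b - a)
  rw [sub_sub_sub_cancel_right, floor_fract_sub_fract] at h
  rw [arcDelta_eq_ite_fract_le, h]
  split_ifs <;> ring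

/-- The function `δ` satisfies the homogeneous 2-cocycle relation:
for all `a, b, c, d ∈ ℝ`, `δ(b,c,d) − δ(a,c,d) + δ(a,b,d) − δ(a,b,c) = 0`. -/
theorem arcDelta_cocycle (a b c d : ℝ) :
    arcDelta b c d - arcDelta a c d + arcDelta a b d - arcDelta a b c = 0 := by
  simp only [arcDelta_eq_floor]
  ring
end

section
/- There exists a unique function φ : SL₂(ℤ) × SL₂(ℤ) → ℚ such that: (a) 12·φ(γ₁,γ₂) ∈ ℤ for all γ₁, γ₂; (b) φ(γ·γ₁, γ·γ₂) = φ(γ₁,γ₂) for all γ, γ₁, γ₂ ∈ SL₂(ℤ); and (c) φ(γ₁,γ₂) + φ(γ₂,γ₃) − φ(γ₁,γ₃) = δ(ℓ₀·γ₁⁻¹, ℓ₀·γ₂⁻¹, ℓ₀·γ₃⁻¹) for all γ₁, γ₂, γ₃ ∈ SL₂(ℤ), where ℓ₀ = (−1, 0) is a row vector, ℓ₀·γ⁻¹ denotes row-vector–matrix multiplication, and δ is the ray-betweenness function defined below. -/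
/-- The wedge product `u ∧ v = u₁v₂ − u₂v₁` of two vectors in `ℝ²`. -/
def wedge (u v : Fin 2 → ℝ) : ℝ := u 0 * v 1 - u 1 * v 0

/-- `v` lies on the ray of `u`: `v = t • u` for some real `t > 0`. -/
def OnRay (u v : Fin 2 → ℝ) : Prop := ∃ t : ℝ, 0 < t ∧ v = t • u

/-- `v` is strictly counterclockwise between `u` and `w`. -/
def StrictlyCCWBetween (u v w : Fin 2 → ℝ) : Prop :=
  (0 < wedge u w ∧ 0 < wedge u v ∧ 0 < wedge v w) ∨
  (wedge u w < 0 ∧ (0 < wedge u v ∨ 0 < wedge v w)) ∨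
  (wedge u w = 0 ∧ ¬ OnRay u w ∧ 0 < wedge u v)

open scoped Classical in
/-- The ray-betweenness function: `δ (u, v, w) = 0` if `v` lies on the ray of `u`, or `v`
lies on the ray of `w`, or `v` is strictly counterclockwise between `u` and `w`;
`δ (u, v, w) = 1` otherwise. -/
noncomputable def rayDelta (u v w : Fin 2 → ℝ) : ℤ :=
  if OnRay u v ∨ OnRay w v ∨ StrictlyCCWBetween u v w then 0 else 1

/-- The vector `ℓ₀ · γ⁻¹ ∈ ℝ²`, where `ℓ₀ = (−1, 0)` is a row vector multiplied on the
right by the matrix `γ⁻¹` for `γ ∈ SL₂(ℤ)`. -/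
noncomputable def rayOfSL (γ : Matrix.SpecialLinearGroup (Fin 2) ℤ) : Fin 2 → ℝ :=
  fun i => ((Matrix.vecMul ![(-1 : ℤ), 0]
    ((γ⁻¹ : Matrix.SpecialLinearGroup (Fin 2) ℤ) : Matrix (Fin 2) (Fin 2) ℤ)) i : ℝ)

/-!
Measure the oriented angle in `[0, 2π)` between two vectors `u`, `v` of the plane in the coordinate
`v ↦ v₀ z + v₁`, for `z` in the upper half-plane. Then `2π δ(u, v, w)` is the failure of additivity
of this angle, so twelve times the angle between the rays of `γ₁` and `γ₂` has coboundary
`2π · 12 δ`. Modulo `2π`, that function is a difference of arguments of twelfth powers of automorphy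
factors. Since the discriminant `Δ` has weight `12` and no zeros, a continuous branch of `arg Δ`
turns this difference into a difference of values, and subtracting it does not affect the
coboundary. What remains is continuous in `z` with values in `2πℤ`, hence constant in `z`, and this
independence of `z` is left invariance. Two solutions differ by a homomorphism `SL₂(ℤ) → ℚ`, which
vanishes because `S` and `S T` are torsion elements generating `SL₂(ℤ)`.
-/

section

open Complex Matrix MatrixGroups Set
open ModularGroup (S T)
open UpperHalfPlane hiding I
open scoped Real

theorem monoidHom_SL2Z_eq_one {M : Type*} [Monoid M] [IsMulTorsionFree M] (f : SL(2, ℤ) →* M) :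
    f = 1 := by
  have hS : f S = 1 := (pow_eq_one_iff_left four_ne_zero).mp <| by
    rw [← map_pow, show (S : SL(2, ℤ)) ^ 4 = 1 by decide, map_one]
  have hST : f (S * T) = f T := by rw [map_mul, hS, one_mul]
  have hT : f T = 1 := (pow_eq_one_iff_left (by norm_num : 6 ≠ 0)).mp <| by
    rw [← hST, ← map_pow, show (S * T) ^ 6 = 1 by decide, map_one]
  refine MonoidHom.eq_of_eqOn_dense SpecialLinearGroup.SL2Z_generators ?_
  rintro _ (rfl | rfl)
  exacts [hS, hT]

theorem eq_of_leftInvariant_of_coboundary_eq {G A : Type*} [Group G] [AddCommGroup A]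
    (hG : ∀ f : G →* Multiplicative A, f = 1) {φ ψ : G × G → A}
    (hφ : ∀ g g₁ g₂, φ (g * g₁, g * g₂) = φ (g₁, g₂))
    (hψ : ∀ g g₁ g₂, ψ (g * g₁, g * g₂) = ψ (g₁, g₂))
    (h : ∀ g₁ g₂ g₃, φ (g₁, g₂) + φ (g₂, g₃) - φ (g₁, g₃) =
      ψ (g₁, g₂) + ψ (g₂, g₃) - ψ (g₁, g₃)) :
    φ = ψ := by
  have map_mul (a b : G) :
      φ (1, a * b) - ψ (1, a * b) = φ (1, a) - ψ (1, a) + (φ (1, b) - ψ (1, b)) := by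
    have hφa : φ (a, a * b) = φ (1, b) := by simpa only [mul_one] using hφ a 1 b
    have hψa : ψ (a, a * b) = ψ (1, b) := by simpa only [mul_one] using hψ a 1 b
    have hab := h 1 a (a * b)
    rw [hφa, hψa, sub_eq_sub_iff_add_eq_add] at hab
    rw [sub_add_sub_comm, sub_eq_sub_iff_add_eq_add, hab, add_comm]
  let f : G →* Multiplicative A := MonoidHom.mk' (fun g => .ofAdd (φ (1, g) - ψ (1, g))) map_mul
  have hf (g : G) : φ (1, g) = ψ (1, g) := sub_eq_zero.mp (DFunLike.congr_fun (hG f) g)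
  ext ⟨g₁, g₂⟩
  calc φ (g₁, g₂) = φ (1, g₁⁻¹ * g₂) := by rw [← hφ g₁⁻¹, inv_mul_cancel]
    _ = ψ (1, g₁⁻¹ * g₂) := hf _
    _ = ψ (g₁, g₂) := by rw [← hψ g₁⁻¹ g₁, inv_mul_cancel]

theorem arg_mem_Ioo_zero_pi_iff {w : ℂ} : arg w ∈ Ioo 0 π ↔ 0 < w.im := by
  have := arg_nonneg_iff (z := w)
  have := arg_eq_zero_iff (z := w)
  have := arg_eq_pi_iff (z := w)
  have := arg_le_pi w
  grind

theorem exists_continuousMap_exp_eq {X : Type*} [TopologicalSpace X] [SimplyConnectedSpace X]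
    [LocallyPathConnectedSpace X] (g : C(X, ℂ)) (hg : ∀ x, g x ≠ 0) :
    ∃ L : C(X, ℂ), ∀ x, exp (L x) = g x := by
  obtain ⟨x₀⟩ : Nonempty X := inferInstance
  obtain ⟨L, ⟨-, hL⟩, -⟩ :=
    isCoveringMapOn_exp.existsUnique_continuousMap_lifts g (exp_log (hg x₀)) hg
  exact ⟨L, congrFun hL⟩

theorem exists_int_forall_eq_mul_two_pi {X : Type*} [TopologicalSpace X] [ConnectedSpace X]
    {f : X → ℝ} (hf : Continuous f) (h : ∀ x, (f x : Real.Angle) = 0) :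
    ∃ n : ℤ, ∀ x, f x = n * (2 * π) := by
  choose n hn using fun x => Real.Angle.coe_eq_zero_iff.mp (h x)
  simp only [zsmul_eq_mul] at hn
  have hn' : Continuous n := Int.isClosedEmbedding_coe_real.continuous_iff.mpr <| by
    simpa only [← hn, Function.comp_def, mul_div_cancel_right₀ _ Real.two_pi_pos.ne'] using
      hf.div_const (2 * π)
  obtain ⟨x₀⟩ : Nonempty X := inferInstance
  exact ⟨n x₀, fun x => by rw [← hn, PreconnectedSpace.constant inferInstance hn']⟩

theorem OnRay.symm {u v : Fin 2 → ℝ} : OnRay u v → OnRay v u := by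
  rintro ⟨t, ht, rfl⟩
  exact ⟨t⁻¹, inv_pos.mpr ht, (inv_smul_smul₀ ht.ne' u).symm⟩

/-- The real-linear coordinate `v ↦ v₀ z + v₁` on the plane attached to a point `z` of the upper
half-plane. It reverses orientation, as it sends the standard basis to `(z, 1)`. -/
noncomputable def modularCoord (z : ℍ) : (Fin 2 → ℝ) →ₗ[ℝ] ℂ :=
  Fintype.linearCombination ℝ ![(z : ℂ), 1]

variable (z : ℍ) {u v w : Fin 2 → ℝ}

theorem modularCoord_apply (v : Fin 2 → ℝ) : modularCoord z v = v 0 * z + v 1 := by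
  simp [modularCoord, Fintype.linearCombination_apply]

theorem modularCoord_ne_zero (hv : v ≠ 0) : modularCoord z v ≠ 0 := by
  rw [modularCoord_apply]
  exact linear_ne_zero z hv

theorem modularCoord_injective : Function.Injective (modularCoord z) :=
  (injective_iff_map_eq_zero _).mpr fun _ => not_imp_not.mp (modularCoord_ne_zero z)

theorem im_neg_modularCoord_div (u v : Fin 2 → ℝ) :
    (-(modularCoord z v / modularCoord z u)).im =
      z.im / normSq (modularCoord z u) * wedge u v := by
  simp only [neg_im, div_im, modularCoord_apply, wedge, add_re, add_im, mul_re, mul_im, ofReal_re,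
    ofReal_im, coe_re, coe_im]
  ring

/-- The angle in `[0, 2π)` by which `u` has to be turned counterclockwise to reach the ray of `v`,
measured in the coordinate `modularCoord z`. Since that coordinate reverses orientation, this is
minus the argument of the quotient; the branch cut of `arg` is moved to the positive reals. -/
noncomputable def ccwAngle (z : ℍ) (u v : Fin 2 → ℝ) : ℝ :=
  π - arg (-(modularCoord z v / modularCoord z u))

theorem ccwAngle_nonneg (u v : Fin 2 → ℝ) : 0 ≤ ccwAngle z u v :=
  sub_nonneg.mpr (arg_le_pi _)

theorem ccwAngle_lt_two_pi (u v : Fin 2 → ℝ) : ccwAngle z u v < 2 * π := by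
  have := neg_pi_lt_arg (-(modularCoord z v / modularCoord z u))
  rw [ccwAngle]
  linarith

theorem coe_ccwAngle (hu : u ≠ 0) (hv : v ≠ 0) :
    (ccwAngle z u v : Real.Angle) = arg (modularCoord z u) - arg (modularCoord z v) := by
  have hu' := modularCoord_ne_zero z hu
  have hv' := modularCoord_ne_zero z hv
  rw [ccwAngle, Real.Angle.coe_sub, arg_neg_coe_angle (div_ne_zero hv' hu'),
    arg_div_coe_angle hv' hu']
  abel

theorem ccwAngle_add (hu : u ≠ 0) (hv : v ≠ 0) (hw : w ≠ 0) :
    ccwAngle z u v + ccwAngle z v w = ccwAngle z u w ∨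
      ccwAngle z u v + ccwAngle z v w = ccwAngle z u w + 2 * π := by
  have hcoe : ((ccwAngle z u v + ccwAngle z v w : ℝ) : Real.Angle) = ccwAngle z u w := by
    rw [Real.Angle.coe_add, coe_ccwAngle z hu hv, coe_ccwAngle z hv hw, coe_ccwAngle z hu hw]
    abel
  obtain ⟨n, hn⟩ := Real.Angle.angle_eq_iff_two_pi_dvd_sub.mp hcoe
  have hlo : (-1 : ℝ) < n := by
    nlinarith [Real.pi_pos, ccwAngle_nonneg z u v, ccwAngle_nonneg z v w, ccwAngle_lt_two_pi z u w]
  have hhi : (n : ℝ) < 2 := by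
    nlinarith [Real.pi_pos, ccwAngle_lt_two_pi z u v, ccwAngle_lt_two_pi z v w,
      ccwAngle_nonneg z u w]
  obtain rfl | rfl : n = 0 ∨ n = 1 := by
    norm_cast at hlo hhi
    omega
  · exact .inl (by simpa [sub_eq_zero] using hn)
  · exact .inr (by simpa [sub_eq_iff_eq_add'] using hn)

open scoped ComplexOrder in
theorem ccwAngle_eq_zero_iff_onRay (hu : u ≠ 0) : ccwAngle z u v = 0 ↔ OnRay u v := by
  have hu' := modularCoord_ne_zero z hu
  rw [ccwAngle, sub_eq_zero, eq_comm, arg_eq_pi_iff_lt_zero, neg_lt_zero,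
    RCLike.pos_iff_exists_ofReal, OnRay]
  refine exists_congr fun t => and_congr_right fun _ => ?_
  rw [eq_div_iff hu', ← RCLike.real_smul_eq_coe_mul, ← map_smul,
    (modularCoord_injective z).eq_iff, eq_comm]

theorem wedge_neg_iff_pi_lt_ccwAngle (hu : u ≠ 0) : wedge u v < 0 ↔ π < ccwAngle z u v := by
  have hscale := div_pos z.im_pos (normSq_pos.mpr (modularCoord_ne_zero z hu))
  rw [ccwAngle, lt_sub_iff_add_lt, add_lt_iff_neg_left, arg_neg_iff, im_neg_modularCoord_div]
  exact (smul_neg_iff_of_pos_left hscale).symm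

theorem wedge_pos_iff_ccwAngle_mem_Ioo (hu : u ≠ 0) :
    0 < wedge u v ↔ ccwAngle z u v ∈ Ioo 0 π := by
  have hscale := div_pos z.im_pos (normSq_pos.mpr (modularCoord_ne_zero z hu))
  rw [← mul_pos_iff_of_pos_left hscale, ← im_neg_modularCoord_div, ← arg_mem_Ioo_zero_pi_iff]
  simp only [ccwAngle, mem_Ioo, sub_pos, sub_lt_self_iff, and_comm]

theorem onRay_or_strictlyCCWBetween_iff_ccwAngle_add (hu : u ≠ 0) (hv : v ≠ 0)
    (hw : w ≠ 0) :
    OnRay u v ∨ OnRay w v ∨ StrictlyCCWBetween u v w ↔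
      ccwAngle z u v + ccwAngle z v w = ccwAngle z u w := by
  have hray : OnRay w v ↔ OnRay v w := ⟨.symm, .symm⟩
  rw [StrictlyCCWBetween, hray, le_antisymm_iff, ← not_lt, ← not_lt,
    ← ccwAngle_eq_zero_iff_onRay z hu, ← ccwAngle_eq_zero_iff_onRay z hv,
    ← ccwAngle_eq_zero_iff_onRay z hu]
  simp only [wedge_pos_iff_ccwAngle_mem_Ioo z hu, wedge_pos_iff_ccwAngle_mem_Ioo z hv,
    wedge_neg_iff_pi_lt_ccwAngle z hu, mem_Ioo]
  have hadd := ccwAngle_add z hu hv hw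
  have huv := ccwAngle_lt_two_pi z u v
  have hvw := ccwAngle_lt_two_pi z v w
  have huw := ccwAngle_lt_two_pi z u w
  have huv₀ := (ccwAngle_nonneg z u v).eq_or_lt'
  have hvw₀ := (ccwAngle_nonneg z v w).eq_or_lt'
  have huw₀ := (ccwAngle_nonneg z u w).eq_or_lt'
  clear hu hv hw hray
  -- For `a, b > 0` additivity fails exactly when `c` wraps around below both `a` and `b`; the three
  -- disjuncts of `StrictlyCCWBetween` test this for `c < π`, `c > π` and `c = π` respectively.
  generalize ccwAngle z u v = a, ccwAngle z v w = b, ccwAngle z u w = c at *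
  grind

theorem ccwAngle_add_eq_add_rayDelta (hu : u ≠ 0) (hv : v ≠ 0) (hw : w ≠ 0) :
    ccwAngle z u v + ccwAngle z v w = ccwAngle z u w + rayDelta u v w * (2 * π) := by
  have hδ := onRay_or_strictlyCCWBetween_iff_ccwAngle_add z hu hv hw
  rw [rayDelta]
  split_ifs with h
  · simpa using hδ.mp h
  · simpa using (ccwAngle_add z hu hv hw).resolve_left (mt hδ.mpr h)

theorem continuous_ccwAngle (hu : u ≠ 0) (hv : v ≠ 0) : Continuous fun z => ccwAngle z u v := by
  by_cases huv : OnRay u v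
  · simp only [fun z => (ccwAngle_eq_zero_iff_onRay z hu).mpr huv, continuous_const]
  have hcoord (v : Fin 2 → ℝ) : Continuous fun z => modularCoord z v := by
    simp only [modularCoord_apply]
    fun_prop
  refine continuous_iff_continuousAt.mpr fun z => continuousAt_const.sub <|
    ContinuousAt.comp (continuousAt_arg (mem_slitPlane_iff_arg.mpr ⟨fun h => huv ?_, ?_⟩))
      ((hcoord v).continuousAt.div (hcoord u).continuousAt (modularCoord_ne_zero z hu)).neg
  · exact (ccwAngle_eq_zero_iff_onRay z hu).mp (sub_eq_zero.mpr h.symm)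
  · exact neg_ne_zero.mpr (div_ne_zero (modularCoord_ne_zero z hv) (modularCoord_ne_zero z hu))

theorem modularCoord_rayOfSL (γ : SL(2, ℤ)) :
    modularCoord z (rayOfSL γ) = denom ((γ * S)⁻¹ : SL(2, ℤ)) z := by
  rw [ModularGroup.denom_apply]
  simp [modularCoord_apply, rayOfSL, ModularGroup.coe_S, mul_apply, adjugate_fin_two]

theorem rayOfSL_ne_zero (γ : SL(2, ℤ)) : rayOfSL γ ≠ 0 := by
  intro h
  have := modularCoord_rayOfSL .I γ
  rw [h, map_zero] at this
  exact denom_ne_zero _ _ this.symm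

theorem denom_SL2Z_mul (γ γ' : SL(2, ℤ)) :
    denom (γ * γ' : SL(2, ℤ)) z = denom γ (γ' • z : ℍ) * denom γ' z := by
  rw [map_mul, map_mul, denom_cocycle _ _ z.im_ne_zero, coe_specialLinearGroup_apply]
  simp [num, denom]

theorem modularCoord_rayOfSL_mul (γ γ' : SL(2, ℤ)) :
    modularCoord z (rayOfSL (γ * γ')) =
      modularCoord (γ⁻¹ • z) (rayOfSL γ') * denom (γ⁻¹ : SL(2, ℤ)) z := by
  rw [modularCoord_rayOfSL, modularCoord_rayOfSL, mul_assoc, mul_inv_rev γ, denom_SL2Z_mul]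

theorem ccwAngle_rayOfSL_mul (γ γ₁ γ₂ : SL(2, ℤ)) :
    ccwAngle z (rayOfSL (γ * γ₁)) (rayOfSL (γ * γ₂)) =
      ccwAngle (γ⁻¹ • z) (rayOfSL γ₁) (rayOfSL γ₂) := by
  rw [ccwAngle, ccwAngle, modularCoord_rayOfSL_mul, modularCoord_rayOfSL_mul,
    mul_div_mul_right _ _ (denom_ne_zero _ z)]

theorem continuous_discriminant : Continuous ModularForm.discriminant :=
  CuspForm.discriminant.holo'.continuous

/-- A continuous logarithm of the modular discriminant on the upper half-plane. -/
noncomputable def logDiscriminant : C(ℍ, ℂ) :=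
  (exists_continuousMap_exp_eq ⟨_, continuous_discriminant⟩ ModularForm.discriminant_ne_zero).choose

theorem exp_logDiscriminant : exp (logDiscriminant z) = ModularForm.discriminant z :=
  (exists_continuousMap_exp_eq ⟨_, continuous_discriminant⟩
    ModularForm.discriminant_ne_zero).choose_spec z

theorem discriminant_smul (γ : SL(2, ℤ)) :
    ModularForm.discriminant (γ • z) = denom γ z ^ 12 * ModularForm.discriminant z :=
  SlashInvariantForm.slash_action_eqn'' CuspForm.discriminant (mem_range_self γ) z

theorem coe_im_logDiscriminant_smul (γ : SL(2, ℤ)) :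
    ((logDiscriminant (γ • z)).im : Real.Angle) =
      12 • (arg (denom γ z) : Real.Angle) + (logDiscriminant z).im := by
  have him (z : ℍ) :
      ((logDiscriminant z).im : Real.Angle) = arg (ModularForm.discriminant z) := by
    rw [← exp_logDiscriminant, arg_exp, Real.Angle.coe_toIocMod]
  rw [him, him, discriminant_smul, arg_mul_coe_angle (pow_ne_zero _ (denom_ne_zero _ z))
    (ModularForm.discriminant_ne_zero z), arg_pow_coe_angle]

/-- Twelve times the angle from the ray of `γ₁` to the ray of `γ₂`, corrected by the change of the
continuous argument of the discriminant from `(γ₁ S)⁻¹ z` to `(γ₂ S)⁻¹ z`. These points are used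
because `rayOfSL γ` is the bottom row of `(γ S)⁻¹`. -/
noncomputable def angleDefect (z : ℍ) (γ₁ γ₂ : SL(2, ℤ)) : ℝ :=
  12 * ccwAngle z (rayOfSL γ₁) (rayOfSL γ₂) +
    ((logDiscriminant ((γ₂ * S)⁻¹ • z)).im - (logDiscriminant ((γ₁ * S)⁻¹ • z)).im)

theorem angleDefect_mul (γ γ₁ γ₂ : SL(2, ℤ)) :
    angleDefect z (γ * γ₁) (γ * γ₂) = angleDefect (γ⁻¹ • z) γ₁ γ₂ := by
  simp only [angleDefect, ccwAngle_rayOfSL_mul, mul_assoc, mul_inv_rev γ, mul_smul]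

theorem angleDefect_add (γ₁ γ₂ γ₃ : SL(2, ℤ)) :
    angleDefect z γ₁ γ₂ + angleDefect z γ₂ γ₃ = angleDefect z γ₁ γ₃ +
      12 * (rayDelta (rayOfSL γ₁) (rayOfSL γ₂) (rayOfSL γ₃) * (2 * π)) := by
  have h := ccwAngle_add_eq_add_rayDelta z (rayOfSL_ne_zero γ₁) (rayOfSL_ne_zero γ₂)
    (rayOfSL_ne_zero γ₃)
  simp only [angleDefect]
  linarith

theorem coe_angleDefect (γ₁ γ₂ : SL(2, ℤ)) : (angleDefect z γ₁ γ₂ : Real.Angle) = 0 := by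
  rw [angleDefect, Real.Angle.coe_add, Real.Angle.coe_sub, coe_im_logDiscriminant_smul,
    coe_im_logDiscriminant_smul, ← Nat.cast_ofNat, Real.Angle.natCast_mul_eq_nsmul,
    coe_ccwAngle z (rayOfSL_ne_zero γ₁) (rayOfSL_ne_zero γ₂), modularCoord_rayOfSL,
    modularCoord_rayOfSL]
  abel

theorem continuous_angleDefect (γ₁ γ₂ : SL(2, ℤ)) : Continuous fun z => angleDefect z γ₁ γ₂ := by
  have := continuous_ccwAngle (rayOfSL_ne_zero γ₁) (rayOfSL_ne_zero γ₂)
  have hlog (γ : SL(2, ℤ)) : Continuous fun z : ℍ => (logDiscriminant (γ • z)).im :=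
    Complex.continuous_im.comp <|
      logDiscriminant.continuous.comp (continuous_const_smul (γ : GL (Fin 2) ℝ))
  exact (continuous_const.mul this).add ((hlog _).sub (hlog _))

theorem exists_int_leftInvariant_coboundary_eq_rayDelta :
    ∃ n : SL(2, ℤ) → SL(2, ℤ) → ℤ, (∀ γ γ₁ γ₂, n (γ * γ₁) (γ * γ₂) = n γ₁ γ₂) ∧
      ∀ γ₁ γ₂ γ₃, n γ₁ γ₂ + n γ₂ γ₃ - n γ₁ γ₃ =
        12 * rayDelta (rayOfSL γ₁) (rayOfSL γ₂) (rayOfSL γ₃) := by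
  choose n hn using fun γ₁ γ₂ =>
    exists_int_forall_eq_mul_two_pi (continuous_angleDefect γ₁ γ₂) (coe_angleDefect · γ₁ γ₂)
  refine ⟨n, fun γ γ₁ γ₂ => ?_, fun γ₁ γ₂ γ₃ => ?_⟩
  · have h := angleDefect_mul .I γ γ₁ γ₂
    rw [hn, hn] at h
    exact_mod_cast mul_right_cancel₀ Real.two_pi_pos.ne' h
  · have h := angleDefect_add .I γ₁ γ₂ γ₃
    rw [hn, hn, hn, ← mul_assoc 12, ← add_mul, ← add_mul] at h
    rw [sub_eq_iff_eq_add']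
    exact_mod_cast mul_right_cancel₀ Real.two_pi_pos.ne' h

end

/-- There exists a unique function
`φ : SL₂(ℤ) × SL₂(ℤ) → ℚ` such that (a) `12·φ(γ₁,γ₂) ∈ ℤ`; (b) `φ` is invariant under
simultaneous left translation; and (c) `φ(γ₁,γ₂) + φ(γ₂,γ₃) − φ(γ₁,γ₃) =
δ(ℓ₀·γ₁⁻¹, ℓ₀·γ₂⁻¹, ℓ₀·γ₃⁻¹)` for all `γ₁, γ₂, γ₃ ∈ SL₂(ℤ)`. -/
theorem rademacher_function_exists_unique :
    ∃! φ : Matrix.SpecialLinearGroup (Fin 2) ℤ × Matrix.SpecialLinearGroup (Fin 2) ℤ → ℚ,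
      (∀ γ₁ γ₂, ∃ n : ℤ, 12 * φ (γ₁, γ₂) = (n : ℚ)) ∧
      (∀ γ γ₁ γ₂, φ (γ * γ₁, γ * γ₂) = φ (γ₁, γ₂)) ∧
      (∀ γ₁ γ₂ γ₃, φ (γ₁, γ₂) + φ (γ₂, γ₃) - φ (γ₁, γ₃)
        = (rayDelta (rayOfSL γ₁) (rayOfSL γ₂) (rayOfSL γ₃) : ℚ)) := by
  obtain ⟨n, hn_mul, hn_add⟩ := exists_int_leftInvariant_coboundary_eq_rayDelta
  have hφ_mul (γ γ₁ γ₂) : (n (γ * γ₁) (γ * γ₂) : ℚ) / 12 = n γ₁ γ₂ / 12 := by rw [hn_mul]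
  have hφ_add (γ₁ γ₂ γ₃) : (n γ₁ γ₂ : ℚ) / 12 + n γ₂ γ₃ / 12 - n γ₁ γ₃ / 12 =
      rayDelta (rayOfSL γ₁) (rayOfSL γ₂) (rayOfSL γ₃) := by
    rw [← add_div, ← sub_div, div_eq_iff (by norm_num), mul_comm]
    exact_mod_cast hn_add γ₁ γ₂ γ₃
  refine ⟨fun p => n p.1 p.2 / 12, ⟨fun γ₁ γ₂ => ⟨n γ₁ γ₂, by field_simp⟩, hφ_mul, hφ_add⟩, ?_⟩
  rintro ψ ⟨-, hψ_mul, hψ_add⟩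
  exact eq_of_leftInvariant_of_coboundary_eq monoidHom_SL2Z_eq_one hψ_mul hφ_mul fun γ₁ γ₂ γ₃ =>
    (hψ_add γ₁ γ₂ γ₃).trans (hφ_add γ₁ γ₂ γ₃).symm
end

section
/- Let g ≥ 1, let t be an integer with 0 ≤ t ≤ 2g, let n ≥ 1, and let p be a prime with p > 2g + 1. Then there exists a prime ℓ not dividing n·p such that p does not divide the product over all s ∈ {0, 1, …, 2g} with s ≠ t of (ℓ^t − ℓ^s). -/
/-!
By Dirichlet's theorem the residue class of a primitive root modulo `p` contains a prime `ℓ`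
larger than any given bound. As `ℓ` has order `p - 1` modulo `p`, the prime `p` divides
`ℓ ^ t - ℓ ^ s` exactly when `t ≡ s` modulo `p - 1`, which never happens for distinct exponents in
`{0, …, p - 2}`.
-/

theorem exists_prime_gt_orderOf_eq_totient (q N : ℕ) [NeZero q] [IsCyclic (ZMod q)ˣ] :
    ∃ ℓ > N, ℓ.Prime ∧ orderOf (ℓ : ZMod q) = q.totient := by
  obtain ⟨u, hu⟩ := IsCyclic.exists_ofOrder_eq_natCard (α := (ZMod q)ˣ)
  obtain ⟨ℓ, hNℓ, hℓ, hℓu⟩ := Nat.forall_exists_prime_gt_and_eq_mod u.isUnit N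
  refine ⟨ℓ, hNℓ, hℓ, ?_⟩
  rw [hℓu, orderOf_units, hu, Nat.card_eq_fintype_card, ZMod.card_units_eq_totient]

theorem intCast_dvd_pow_sub_pow_iff {q : ℕ} {a : ℤ} (ha : IsOfFinOrder (a : ZMod q)) {t s : ℕ} :
    (q : ℤ) ∣ a ^ t - a ^ s ↔ t ≡ s [MOD orderOf (a : ZMod q)] := by
  rw [← ha.pow_eq_pow_iff_modEq, ← ZMod.intCast_zmod_eq_zero_iff_dvd, Int.cast_sub,
    Int.cast_pow, Int.cast_pow, sub_eq_zero]

theorem prime_dvd_prod_pow_sub_pow_iff {p : ℕ} (hp : p.Prime) {a : ℤ}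
    (ha : IsOfFinOrder (a : ZMod p)) {t : ℕ} {S : Finset ℕ} :
    (p : ℤ) ∣ ∏ s ∈ S, (a ^ t - a ^ s) ↔ ∃ s ∈ S, t ≡ s [MOD orderOf (a : ZMod p)] := by
  simp only [(Nat.prime_iff_prime_int.mp hp).dvd_finsetProd_iff, intCast_dvd_pow_sub_pow_iff ha]

theorem exists_prime_not_dividing_eigenvalue_product_general {n p : ℕ} (hn : n ≠ 0)
    (hp : p.Prime) :
    ∃ ℓ : ℕ, ℓ.Prime ∧ ¬ ℓ ∣ n ∧ ∀ (t : ℕ) (S : Finset ℕ),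
      (p : ℤ) ∣ ∏ s ∈ S, ((ℓ : ℤ) ^ t - (ℓ : ℤ) ^ s) ↔ ∃ s ∈ S, t ≡ s [MOD p - 1] := by
  have : Fact p.Prime := ⟨hp⟩
  obtain ⟨ℓ, hnℓ, hℓ, hord⟩ := exists_prime_gt_orderOf_eq_totient p n
  replace hord : orderOf ((ℓ : ℤ) : ZMod p) = p - 1 := by
    rw [Int.cast_natCast, hord, Nat.totient_prime hp]
  have hfin : IsOfFinOrder ((ℓ : ℤ) : ZMod p) :=
    orderOf_pos_iff.mp (hord ▸ Nat.sub_pos_of_lt hp.one_lt)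
  refine ⟨ℓ, hℓ, Nat.not_dvd_of_pos_of_lt (Nat.pos_of_ne_zero hn) hnℓ, fun t S ↦ ?_⟩
  rw [prime_dvd_prod_pow_sub_pow_iff hp hfin, hord]

open Finset in
/-- Let `g ≥ 1`, let `0 ≤ t ≤ 2g`, let `n ≥ 1`, and let `p` be a prime
with `p > 2g + 1`. Then there exists a prime `ℓ` not dividing `n·p` such that `p` does not
divide `∏_{0 ≤ s ≤ 2g, s ≠ t} (ℓ^t − ℓ^s)`. -/
theorem exists_prime_not_dividing_eigenvalue_product (g t n p : ℕ)
    (hg : 1 ≤ g) (ht : t ≤ 2 * g) (hn : 1 ≤ n) (hp : p.Prime) (hp2 : 2 * g + 1 < p) :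
    ∃ ℓ : ℕ, ℓ.Prime ∧ ¬ ℓ ∣ n * p ∧
      ¬ (p : ℤ) ∣ ∏ s ∈ (range (2 * g + 1)).erase t, ((ℓ : ℤ) ^ t - (ℓ : ℤ) ^ s) := by
  obtain ⟨ℓ, hℓ, hℓ_dvd, hprod⟩ := exists_prime_not_dividing_eigenvalue_product_general
    (mul_ne_zero (Nat.one_le_iff_ne_zero.mp hn) hp.ne_zero) hp
  refine ⟨ℓ, hℓ, hℓ_dvd, mt (hprod t _).mp fun ⟨s, hs, hts⟩ ↦ ?_⟩
  have hs_lt : s < 2 * g + 1 := mem_range.mp (mem_of_mem_erase hs)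
  exact ne_of_mem_erase hs (hts.eq_of_lt_of_lt (by lia) (by lia)).symm
end

section
/- Let W denote the representation of SL₂(ℤ) on ℤ² by matrix–vector multiplication (the standard representation). Then the first group homology H₁(SL₂(ℤ), W) is annihilated by 2, i.e. 2·x = 0 for every x ∈ H₁(SL₂(ℤ), W). -/
/-- The standard representation `W = ℤ²` of `SL₂(ℤ)` by matrix–vector multiplication:
`γ • w = γ.mulVec w`, as a `ℤ`-linear endomorphism. -/
noncomputable def stdAct (γ : Matrix.SpecialLinearGroup (Fin 2) ℤ) :
    (Fin 2 → ℤ) →ₗ[ℤ] (Fin 2 → ℤ) :=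
  ((γ : Matrix (Fin 2) (Fin 2) ℤ)).mulVecLin

/-- Degree-1 differential of the bar complex computing the group homology
`H₁(SL₂(ℤ), W)`: on a generator `[γ] ⊗ w` (encoded as `Finsupp.single γ w`) it is
`γ • w − w`. -/
noncomputable def barD1 :
    (Matrix.SpecialLinearGroup (Fin 2) ℤ →₀ (Fin 2 → ℤ)) →ₗ[ℤ] (Fin 2 → ℤ) :=
  Finsupp.lsum ℕ fun γ => stdAct γ - LinearMap.id

/-- Degree-2 differential of the bar complex: on a generator `[γ₁|γ₂] ⊗ w` it is
`[γ₂] ⊗ w − [γ₁γ₂] ⊗ w + [γ₁] ⊗ (γ₂ • w)`. -/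
noncomputable def barD2 :
    ((Matrix.SpecialLinearGroup (Fin 2) ℤ × Matrix.SpecialLinearGroup (Fin 2) ℤ)
        →₀ (Fin 2 → ℤ)) →ₗ[ℤ]
      (Matrix.SpecialLinearGroup (Fin 2) ℤ →₀ (Fin 2 → ℤ)) :=
  Finsupp.lsum ℕ fun p =>
    Finsupp.lsingle p.2 - Finsupp.lsingle (p.1 * p.2)
      + (Finsupp.lsingle p.1).comp (stdAct p.2)

/-!
A central element `z` of `G` acts trivially on the homology of `G` with any coefficients, because
`[γ] ⊗ w ↦ [z|γ] ⊗ w − [γ|z] ⊗ w` is a homotopy between zero and the action of `1 − z` on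
coefficients. The central element `-1` of `SL₂(ℤ)` acts on `ℤ²` as `-1`, so `1 − (−1) = 2` kills
the homology.
-/

section CentralHomotopy

open Finsupp

variable {k G V : Type*} [Semiring k] [AddCommGroup V] [Module k V]

variable (k V) in
/-- The degree-1 part `[γ] ⊗ w ↦ [z|γ] ⊗ w − [γ|z] ⊗ w` of the chain homotopy by which a central
element `z` is seen to act trivially on homology. -/
noncomputable def centralHomotopy (z : G) : (G →₀ V) →ₗ[k] (G × G →₀ V) :=
  lsum ℕ fun γ => lsingle (z, γ) - lsingle (γ, z)

theorem centralHomotopy_single (z γ : G) (w : V) :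
    centralHomotopy k V z (single γ w) = single (z, γ) w - single (γ, z) w := by
  simp [centralHomotopy]

variable [Monoid G]

/-- The degree-1 bar differential `[γ] ⊗ w ↦ γ • w − w` with coefficients in a representation,
in the convention of `barD1`. -/
noncomputable def barDiff₁ (ρ : Representation k G V) : (G →₀ V) →ₗ[k] V :=
  lsum ℕ fun γ => ρ γ - LinearMap.id

/-- The degree-2 bar differential
`[γ₁|γ₂] ⊗ w ↦ [γ₂] ⊗ w − [γ₁γ₂] ⊗ w + [γ₁] ⊗ (γ₂ • w)` with coefficients in a representation,
in the convention of `barD2`. -/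
noncomputable def barDiff₂ (ρ : Representation k G V) : (G × G →₀ V) →ₗ[k] (G →₀ V) :=
  lsum ℕ fun p => lsingle p.2 - lsingle (p.1 * p.2) + lsingle p.1 ∘ₗ ρ p.2

theorem barDiff₁_single (ρ : Representation k G V) (γ : G) (w : V) :
    barDiff₁ ρ (single γ w) = ρ γ w - w := by
  simp [barDiff₁]

theorem barDiff₂_single (ρ : Representation k G V) (γ₁ γ₂ : G) (w : V) :
    barDiff₂ ρ (single (γ₁, γ₂) w) =
      single γ₂ w - single (γ₁ * γ₂) w + single γ₁ (ρ γ₂ w) := by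
  simp [barDiff₂]

theorem barDiff₂_comp_centralHomotopy (ρ : Representation k G V) {z : G}
    (hz : z ∈ Submonoid.center G) :
    barDiff₂ ρ ∘ₗ centralHomotopy k V z =
      mapRange.linearMap (LinearMap.id - ρ z) + lsingle z ∘ₗ barDiff₁ ρ := by
  refine lhom_ext fun γ w => ?_
  have hcomm : γ * z = z * γ := Submonoid.mem_center_iff.mp hz γ
  simp only [LinearMap.comp_apply, LinearMap.add_apply, LinearMap.sub_apply, LinearMap.id_apply,
    centralHomotopy_single, map_sub, barDiff₂_single, barDiff₁_single, hcomm,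
    mapRange.linearMap_apply, mapRange_single, lsingle_apply, single_sub]
  abel

theorem barDiff₂_centralHomotopy_of_barDiff₁_eq_zero (ρ : Representation k G V) {z : G}
    (hz : z ∈ Submonoid.center G) {f : G →₀ V} (hf : barDiff₁ ρ f = 0) :
    barDiff₂ ρ (centralHomotopy k V z f) = mapRange.linearMap (LinearMap.id - ρ z) f := by
  simpa [hf] using LinearMap.congr_fun (barDiff₂_comp_centralHomotopy ρ hz) f

theorem h1_sl2_std_two_torsion_general (ρ : Representation k G V) {z : G}
    (hz : z ∈ Submonoid.center G) (hρz : ρ z = -LinearMap.id)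
    {f : G →₀ V} (hf : barDiff₁ ρ f = 0) : ∃ h, barDiff₂ ρ h = (2 : ℤ) • f := by
  refine ⟨centralHomotopy k V z f, ?_⟩
  rw [barDiff₂_centralHomotopy_of_barDiff₁_eq_zero ρ hz hf, hρz]
  ext γ
  simp [two_smul]

end CentralHomotopy

/-- The standard representation of `SL₂(ℤ)`, i.e. `stdAct` bundled as a homomorphism. -/
noncomputable def stdRep :
    Representation ℤ (Matrix.SpecialLinearGroup (Fin 2) ℤ) (Fin 2 → ℤ) where
  toFun := stdAct
  map_one' := Matrix.mulVecLin_one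
  map_mul' γ₁ γ₂ := Matrix.mulVecLin_mul γ₁.val γ₂.val

theorem barD1_eq_barDiff₁_stdRep : barD1 = barDiff₁ stdRep := rfl

theorem barD2_eq_barDiff₂_stdRep : barD2 = barDiff₂ stdRep := rfl

theorem stdRep_neg_one : stdRep (-1) = -LinearMap.id := by
  change stdAct (-1) = -LinearMap.id
  ext
  simp [stdAct]

theorem neg_one_mem_submonoid_center (M : Type*) [Monoid M] [HasDistribNeg M] :
    (-1 : M) ∈ Submonoid.center M :=
  Submonoid.mem_center_iff.mpr Commute.neg_one_right

/-- The first group homology `H₁(SL₂(ℤ), W)` of the standard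
representation `W = ℤ²` is annihilated by `2`: every `1`-cycle of the bar complex becomes
a boundary after multiplication by `2`, i.e. `2·x = 0` for every `x ∈ H₁ = ker d₁/im d₂`. -/
theorem h1_sl2_std_two_torsion :
    ∀ f : Matrix.SpecialLinearGroup (Fin 2) ℤ →₀ (Fin 2 → ℤ),
      barD1 f = 0 → ∃ h, barD2 h = (2 : ℤ) • f := by
  rw [barD1_eq_barDiff₁_stdRep, barD2_eq_barDiff₂_stdRep]
  exact fun _ =>
    h1_sl2_std_two_torsion_general stdRep (neg_one_mem_submonoid_center _) stdRep_neg_one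
end

section
/- Let n be a prime. Define φ_n : M₂(ℤ/nℤ) → ℤ by φ_n(M) = n⁴ − n³ − n² + n if M = 0; φ_n(M) = n − n² if M ≠ 0 and det M = 0; and φ_n(M) = n if det M ≠ 0. Then for every nonzero column vector v ∈ (ℤ/nℤ)² and every u ∈ (ℤ/nℤ)², the sum of φ_n(M) over all matrices M ∈ M₂(ℤ/nℤ) with M·v = u equals 0. -/
/-- The multiplicity function `φ_n` of the cycle `e_n` on `M₂(ℤ/nℤ)`:
`φ_n(M) = n⁴ − n³ − n² + n` if `M = 0`; `φ_n(M) = n − n²` if `M ≠ 0` and `det M = 0`;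
and `φ_n(M) = n` if `det M ≠ 0`. -/
def phiCycle (n : ℕ) (M : Matrix (Fin 2) (Fin 2) (ZMod n)) : ℤ :=
  if M = 0 then (n : ℤ) ^ 4 - (n : ℤ) ^ 3 - (n : ℤ) ^ 2 + n
  else if M.det = 0 then (n : ℤ) - (n : ℤ) ^ 2
  else (n : ℤ)

/-!
Put `q = n`. As a combination of indicator functions,
`φ_n = q - q² · 1_{det M = 0} + (q⁴ - q³) · 1_{M = 0}`, so it suffices to count matrices on the
fiber `M v = u`. The rows of `M` are constrained independently, each to an affine hyperplane, so
the fiber has `q²` points. If `u = 0`, every point is singular and exactly one is zero, and the sum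
is `q³ - q⁴ + (q⁴ - q³)`. If `u ≠ 0`, the singular points are the rank-one matrices `u ℓᵀ` with
`ℓ ⬝ v = 1`; there are `q` of them, none is zero, and the sum is `q³ - q² · q`.
-/

open Matrix Finset

section RankOne

theorem vecMulVec_right_injective {R m n : Type*} [Mul R] [Zero R] [IsLeftCancelMulZero R]
    {u : m → R} (hu : u ≠ 0) : Function.Injective (vecMulVec u : (n → R) → Matrix m n R) := by
  obtain ⟨i, hi⟩ := Function.ne_iff.mp hu
  exact fun l l' h => funext fun j => mul_left_cancel₀ hi (congr_fun₂ h i j)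

variable {K m n : Type*} [Field K] [Fintype n]

theorem det_eq_zero_iff_rank_lt_card [DecidableEq n] {M : Matrix n n K} :
    M.det = 0 ↔ M.rank < Fintype.card n := by
  refine ⟨fun h => ?_, fun h => by_contra fun hM => h.ne (rank_of_det_ne_zero hM)⟩
  obtain ⟨w, hw, hMw⟩ := exists_mulVec_eq_zero_iff.mpr h
  have ker_pos : 0 < Module.finrank K (LinearMap.ker M.mulVecLin) :=
    Submodule.one_le_finrank_iff.mpr ((Submodule.ne_bot_iff _).mpr ⟨w, hMw, hw⟩)
  have rank_nullity := M.mulVecLin.finrank_range_add_finrank_ker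
  rw [Module.finrank_fintype_fun_eq_card] at rank_nullity
  exact (Nat.lt_add_of_pos_right ker_pos).trans_eq rank_nullity

theorem exists_vecMulVec_mulVec_eq_of_rank_le_one {M : Matrix m n K} {v : n → K}
    (hv : M *ᵥ v ≠ 0) (hM : M.rank ≤ 1) : ∃ l, vecMulVec (M *ᵥ v) l = M := by
  classical
  let u : LinearMap.range M.mulVecLin := ⟨M *ᵥ v, v, rfl⟩
  have hu : u ≠ 0 := fun h => hv (congrArg Subtype.val h)
  have rank_eq_one : Module.finrank K (LinearMap.range M.mulVecLin) = 1 :=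
    hM.antisymm (Module.finrank_pos_iff_exists_ne_zero.mpr ⟨u, hu⟩)
  have col_mem (j : n) : M.col j ∈ LinearMap.range M.mulVecLin :=
    ⟨Pi.single j 1, mulVec_single_one M j⟩
  choose l hl using fun j =>
    (finrank_eq_one_iff_of_nonzero' u hu).mp rank_eq_one ⟨M.col j, col_mem j⟩
  refine ⟨l, ext fun i j => ?_⟩
  have entry : l j * (M *ᵥ v) i = M i j := congr_fun (congrArg Subtype.val (hl j)) i
  rw [vecMulVec_apply, mul_comm, entry]

theorem mulVec_eq_and_rank_le_one_iff {M : Matrix m n K} {u : m → K} {v : n → K} (hu : u ≠ 0) :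
    M *ᵥ v = u ∧ M.rank ≤ 1 ↔ ∃ l, l ⬝ᵥ v = 1 ∧ vecMulVec u l = M := by
  constructor
  · rintro ⟨hMv, hM⟩
    obtain ⟨l, hl⟩ := exists_vecMulVec_mulVec_eq_of_rank_le_one (hMv ▸ hu) hM
    rw [hMv] at hl
    refine ⟨l, smul_left_injective K hu ?_, hl⟩
    simpa [← hl, vecMulVec_mulVec] using hMv
  · rintro ⟨l, hl, rfl⟩
    exact ⟨by simp [vecMulVec_mulVec, hl], rank_vecMulVec_le u l⟩

end RankOne

section Counting

theorem card_fiber_mul_card_of_surjective {G H : Type*} [AddGroup G] [Fintype G] [AddMonoid H]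
    [Fintype H] [DecidableEq H] {f : G →+ H} (hf : Function.Surjective f) (y : H) :
    #{x | f x = y} * Fintype.card H = Fintype.card G :=
  calc #{x | f x = y} * Fintype.card H = ∑ z : H, #{x | f x = z} := by
        simp [fun z => AddMonoidHom.card_fiber_eq_of_mem_range f (hf z) (hf y), mul_comm]
    _ = Fintype.card G := (card_eq_sum_card_fiberwise fun _ _ => mem_univ _).symm

variable {K m n : Type*} [Field K] [Fintype K] [DecidableEq K] [Fintype m] [DecidableEq m]
  [Fintype n] [DecidableEq n]

theorem card_filter_dotProduct_eq {v : n → K} (hv : v ≠ 0) (a : K) :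
    #{l : n → K | l ⬝ᵥ v = a} = Fintype.card K ^ (Fintype.card n - 1) := by
  have surjective : Function.Surjective (dotProductEquiv K n v) :=
    LinearMap.surjective ((dotProductEquiv K n).map_ne_zero_iff.mpr hv)
  have nonempty : Nonempty n := (Function.ne_iff.mp hv).nonempty
  refine Nat.eq_of_mul_eq_mul_right (Fintype.card_pos (α := K)) ?_
  calc #{l : n → K | l ⬝ᵥ v = a} * Fintype.card K = Fintype.card (n → K) := by
        simpa [dotProduct_comm v] using
          card_fiber_mul_card_of_surjective (f := (dotProductEquiv K n v).toAddMonoidHom)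
            surjective a
    _ = Fintype.card K ^ (Fintype.card n - 1) * Fintype.card K := by
        rw [Fintype.card_fun, pow_sub_one_mul Fintype.card_ne_zero]

theorem card_filter_mulVec_eq {v : n → K} (hv : v ≠ 0) (u : m → K) :
    #{M : Matrix m n K | M *ᵥ v = u} =
      (Fintype.card K ^ (Fintype.card n - 1)) ^ Fintype.card m :=
  calc #{M : Matrix m n K | M *ᵥ v = u}
      = #(Fintype.piFinset fun i => {l : n → K | l ⬝ᵥ v = u i}) :=
        card_equiv of.symm fun M => by
          simp only [mem_filter_univ, Fintype.mem_piFinset]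
          exact funext_iff
    _ = (Fintype.card K ^ (Fintype.card n - 1)) ^ Fintype.card m := by
        simp [card_filter_dotProduct_eq hv]

theorem card_filter_mulVec_eq_and_rank_le_one {v : n → K} (hv : v ≠ 0) {u : m → K} (hu : u ≠ 0) :
    #{M : Matrix m n K | M *ᵥ v = u ∧ M.rank ≤ 1} =
      Fintype.card K ^ (Fintype.card n - 1) := by
  have outer_products : ({M : Matrix m n K | M *ᵥ v = u ∧ M.rank ≤ 1} : Finset (Matrix m n K)) =
      image (vecMulVec u) {l : n → K | l ⬝ᵥ v = 1} := by
    ext M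
    simp [mulVec_eq_and_rank_le_one_iff hu]
  rw [outer_products, card_image_of_injective _ (vecMulVec_right_injective hu),
    card_filter_dotProduct_eq hv]

end Counting

section Multiplicity

variable {K : Type*} [Field K] [Fintype K] [DecidableEq K]

/-- The analogue of `φ_n` on the `2 × 2` matrices over an arbitrary finite field `K`, with the
cardinality of `K` in place of `n`; it equals `phiCycle n` when `K` is `ZMod n`. -/
def cycleMultiplicity (M : Matrix (Fin 2) (Fin 2) K) : ℤ :=
  if M = 0 then
    (Fintype.card K : ℤ) ^ 4 - (Fintype.card K : ℤ) ^ 3 - (Fintype.card K : ℤ) ^ 2 + Fintype.card K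
  else if M.det = 0 then (Fintype.card K : ℤ) - (Fintype.card K : ℤ) ^ 2
  else (Fintype.card K : ℤ)

theorem cycleMultiplicity_eq_indicators (M : Matrix (Fin 2) (Fin 2) K) :
    cycleMultiplicity M = Fintype.card K - (if M.det = 0 then (Fintype.card K : ℤ) ^ 2 else 0) +
      (if M = 0 then (Fintype.card K : ℤ) ^ 4 - (Fintype.card K : ℤ) ^ 3 else 0) := by
  unfold cycleMultiplicity
  by_cases hM : M = 0
  · simp only [hM, det_zero, if_true]
    ring
  · by_cases hdet : M.det = 0 <;> simp [hM, hdet]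

theorem sum_cycleMultiplicity (s : Finset (Matrix (Fin 2) (Fin 2) K)) :
    ∑ M ∈ s, cycleMultiplicity M = #s * (Fintype.card K : ℤ)
      - #{M ∈ s | M.det = 0} * (Fintype.card K : ℤ) ^ 2
      + #{M ∈ s | M = 0} * ((Fintype.card K : ℤ) ^ 4 - (Fintype.card K : ℤ) ^ 3) := by
  simp only [cycleMultiplicity_eq_indicators, sum_add_distrib, sum_sub_distrib, ← sum_filter,
    sum_const, nsmul_eq_mul, mul_sub]

theorem card_filter_mulVec_eq_and_det_eq_zero {v : Fin 2 → K} (hv : v ≠ 0) {u : Fin 2 → K}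
    (hu : u ≠ 0) :
    #{M : Matrix (Fin 2) (Fin 2) K | M *ᵥ v = u ∧ M.det = 0} = Fintype.card K := by
  simpa [det_eq_zero_iff_rank_lt_card, Nat.lt_succ_iff] using
    card_filter_mulVec_eq_and_rank_le_one hv hu

theorem phiCycle_pushforward_zero_general {v : Fin 2 → K} (hv : v ≠ 0) (u : Fin 2 → K) :
    ∑ M with M *ᵥ v = u, cycleMultiplicity M = 0 := by
  have card_fiber : #{M : Matrix (Fin 2) (Fin 2) K | M *ᵥ v = u} = Fintype.card K ^ 2 := by
    simpa using card_filter_mulVec_eq hv u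
  rw [sum_cycleMultiplicity, card_fiber]
  rcases eq_or_ne u 0 with rfl | hu
  · have singular : ∀ M : Matrix (Fin 2) (Fin 2) K, M *ᵥ v = 0 → M.det = 0 :=
      fun M hM => exists_mulVec_eq_zero_iff.mp ⟨v, hv, hM⟩
    rw [filter_true_of_mem (by simpa using singular), card_fiber, filter_eq',
      if_pos (by simp), card_singleton]
    push_cast
    ring
  · have nonzero : ∀ M : Matrix (Fin 2) (Fin 2) K, M *ᵥ v = u → M ≠ 0 := by
      rintro M hM rfl
      exact hu (by simpa using hM.symm)
    rw [filter_filter, card_filter_mulVec_eq_and_det_eq_zero hv hu,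
      filter_false_of_mem (p := (· = 0)) (by simpa using nonzero), card_empty]
    push_cast
    ring

end Multiplicity

/-- Let `n` be a prime. For every nonzero column vector
`v ∈ (ℤ/nℤ)²` and every `u ∈ (ℤ/nℤ)²`, the sum of `φ_n(M)` over all matrices
`M ∈ M₂(ℤ/nℤ)` with `M·v = u` equals `0`. -/
theorem phiCycle_pushforward_zero (n : ℕ) [NeZero n] (hn : n.Prime)
    (v : Fin 2 → ZMod n) (hv : v ≠ 0) (u : Fin 2 → ZMod n) :
    ∑ M ∈ Finset.univ.filter
        (fun M : Matrix (Fin 2) (Fin 2) (ZMod n) => M.mulVec v = u),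
      phiCycle n M = 0 := by
  have : Fact n.Prime := ⟨hn⟩
  simpa [phiCycle, cycleMultiplicity, ZMod.card] using phiCycle_pushforward_zero_general hv u
end
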